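/- arXiv:1808.05381 — 11 statements merged into one kernel-verified Lean document; each statement's English description precedes it below -/
import Mathlib

section
/- Let K be a field that is an algebraic extension of its prime subfield (i.e. every element of K is algebraic over the prime subfield of K), let A be a unital associative K-algebra, and let d : A → A be a derivation of the ring A. Then d vanishes on the image of K in A (d(algebraMap K A (k)) = 0 for all k ∈ K) and d is a K-linear map (d(k • a) = k • d(a) for all k ∈ K, a ∈ A). -/
/-- Let `K` be a field which is an algebraic extension of its prime subfield
(the prime subfield is `⊥ : Subfield K`), let `A` be a unital associative `K`-algebra and let
`d : A → A` be a derivation of the ring `A`. Then `d` vanishes on the image of `K` in `A`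
and `d` is `K`-linear. -/
theorem derivation_eq_zero_on_field_and_linear {K : Type*} [Field K]
    (halg : ∀ x : K, IsAlgebraic (⊥ : Subfield K) x)
    {A : Type*} [Ring A] [Algebra K A]
    (d : A → A)
    (hadd : ∀ a b : A, d (a + b) = d a + d b)
    (hleib : ∀ a b : A, d (a * b) = d a * b + a * d b) :
    (∀ k : K, d (algebraMap K A k) = 0) ∧ (∀ (k : K) (a : A), d (k • a) = k • d a) := by
  have key : ∀ k : K, d (algebraMap K A k) = 0 := by
    have h0 : d 0 = 0 := by simpa using hadd 0 0
    have h1 : d 1 = 0 := by simpa using hleib 1 1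
    have hneg : ∀ a, d (-a) = - d a := fun a => by
      have := hadd (-a) a
      rw [neg_add_cancel, h0] at this
      exact eq_neg_of_add_eq_zero_left this.symm
    have hmul : ∀ x y : K, d (algebraMap K A (x * y)) =
        x • d (algebraMap K A y) + y • d (algebraMap K A x) := fun x y => by
      rw [map_mul, hleib, ← Algebra.commutes, Algebra.smul_def, Algebra.smul_def, add_comm]
    let S : Subfield K :=
      { carrier := {k | d (algebraMap K A k) = 0}
        zero_mem' := by simp [h0]
        one_mem' := by simp [h1]
        add_mem' := by
          intro a b ha hb
          simp only [Set.mem_setOf_eq] at *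
          rw [map_add, hadd, ha, hb, add_zero]
        neg_mem' := by
          intro a ha
          simp only [Set.mem_setOf_eq] at *
          rw [map_neg, hneg, ha, neg_zero]
        mul_mem' := by
          intro a b ha hb
          simp only [Set.mem_setOf_eq] at *
          rw [hmul, ha, hb, smul_zero, smul_zero, add_zero]
        inv_mem' := by
          intro a ha
          simp only [Set.mem_setOf_eq] at *
          by_cases h : a = 0
          · simp [h, h0]
          have := hmul a a⁻¹
          rw [mul_inv_cancel₀ h, map_one, h1, ha, smul_zero, add_zero] at this
          exact (smul_eq_zero_iff_right h).1 this.symm }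
    have hbot : ∀ x : (⊥ : Subfield K), d (algebraMap K A x) = 0 := fun x =>
      (bot_le : (⊥ : Subfield K) ≤ S) x.2
    let D : Derivation (⊥ : Subfield K) K A := Derivation.mk'
      { toFun := fun k => d (algebraMap K A k)
        map_add' := fun x y => by rw [map_add, hadd]
        map_smul' := fun x y => by
          rw [Subfield.smul_def, smul_eq_mul, hmul, hbot, smul_zero, add_zero]; rfl }
      hmul
    have hperf : PerfectField (⊥ : Subfield K) := by
      obtain ⟨p, hp⟩ := CharP.exists K
      rcases CharP.char_is_prime_or_zero K p with h | h
      · haveI : Fact p.Prime := ⟨h⟩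
        have hle : (⊥ : Subfield K) ≤ (ZMod.castHom (dvd_refl p) K).fieldRange := bot_le
        have : Finite (⊥ : Subfield K) :=
          Set.Finite.subset (Set.finite_range (ZMod.castHom (dvd_refl p) K)) hle
        infer_instance
      · subst h
        haveI : CharZero K := CharP.charP_to_charZero K
        infer_instance
    intro k
    have hint := (halg k).isIntegral
    have hsep := PerfectField.separable_of_irreducible (minpoly.irreducible hint)
    have h := D.map_aeval (minpoly (⊥ : Subfield K) k) k
    rw [minpoly.aeval, map_zero] at h
    exact (smul_eq_zero_iff_right (hsep.aeval_derivative_ne_zero (minpoly.aeval _ k))).1 h.symm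
  refine ⟨key, fun k a => ?_⟩
  rw [Algebra.smul_def, hleib, key, zero_mul, zero_add, Algebra.smul_def]
end

section
/- Let K be a field that is an algebraic extension of its prime subfield, and let G be a torsion group whose center Z(G) has finite index in G. Suppose that either K has characteristic 0, or K has characteristic p > 0 and p does not divide the order of g for every g ∈ G. Then every derivation d of the group algebra KG is inner, i.e. there exists b ∈ KG such that d(a) = ab − ba for all a ∈ KG. -/
theorem perfBot {K : Type*} [Field K] : PerfectField (⊥ : Subfield K) := by
  obtain ⟨p, hp⟩ := ExpChar.exists (⊥ : Subfield K)
  have hpK : ExpChar K p := expChar_of_injective_ringHom (Subfield.subtype (⊥ : Subfield K)).injective p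
  cases hp with
  | zero => infer_instance
  | prime hprime =>
    have := Fact.mk hprime
    have key : (⊥ : Subfield K) ≤ RingHom.eqLocusField (frobenius K p) (RingHom.id K) := bot_le
    have : PerfectRing (⊥ : Subfield K) p := PerfectRing.ofSurjective _ p (fun x => ⟨x, by
      have := key x.2
      apply Subtype.ext
      simpa [frobenius_def] using this⟩)
    exact PerfectRing.toPerfectField _ p

theorem derZero {K : Type*} [Field K] (halg : ∀ x : K, IsAlgebraic (⊥ : Subfield K) x)
    {M : Type*} [AddCommGroup M] [Module K M] (D : K → M) (hadd : ∀ a b, D (a + b) = D a + D b)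
    (hmul : ∀ a b, D (a * b) = a • D b + b • D a) : ∀ x, D x = 0 := by
  have h1 : D 1 = 0 := by simpa using hmul 1 1
  have h0 : D 0 = 0 := by simpa using hadd 0 0
  let S : Subfield K :=
    { carrier := {x | D x = 0}
      mul_mem' := fun {a b} ha hb => by simp only [Set.mem_ofPred_eq] at *; simp [hmul, ha, hb]
      one_mem' := h1
      add_mem' := fun {a b} ha hb => by simp only [Set.mem_ofPred_eq] at *; simp [hadd, ha, hb]
      zero_mem' := h0
      neg_mem' := fun {a} ha => by
        simp only [Set.mem_ofPred_eq] at *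
        have := hadd a (-a)
        simpa [h0, ha] using this.symm
      inv_mem' := fun a ha => by
        simp only [Set.mem_ofPred_eq] at *
        by_cases h : a = 0
        · simp [h, h0]
        · have := hmul a a⁻¹
          rw [mul_inv_cancel₀ h, h1, ha] at this
          simpa [h] using this.symm }
  have hS : (⊥ : Subfield K) ≤ S := bot_le
  have hb : ∀ c : (⊥ : Subfield K), D (c : K) = 0 := fun c => hS c.2
  have : PerfectField (⊥ : Subfield K) := perfBot
  have : Algebra.IsAlgebraic (⊥ : Subfield K) K := ⟨halg⟩
  let L : K →ₗ[(⊥ : Subfield K)] M :=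
    { toFun := D
      map_add' := hadd
      map_smul' := fun c x => by
        show D ((c : K) * x) = (c : K) • D x
        rw [hmul, hb]; simp }
  let E : Derivation (⊥ : Subfield K) K M := Derivation.mk' L hmul
  have : Algebra.FormallyUnramified (⊥ : Subfield K) K :=
    Algebra.FormallyUnramified.of_isSeparable _ _
  intro x
  show E x = 0
  rw [← E.liftKaehlerDifferential_comp_D, Subsingleton.elim (KaehlerDifferential.D _ _ x) 0, map_zero]

/-- Let `K` be a field which is an algebraic extension of its prime subfield,
and let `G` be a torsion group whose center has finite index in `G`. Suppose that either
`char K = 0` or `char K = p > 0` and `p` does not divide the order of any `g ∈ G`. Then every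
derivation of the group algebra `K G` is inner. -/
theorem derivation_groupAlgebra_isInner {K : Type*} [Field K]
    (halg : ∀ x : K, IsAlgebraic (⊥ : Subfield K) x)
    {G : Type*} [Group G] (htor : ∀ g : G, IsOfFinOrder g)
    [hfin : (Subgroup.center G).FiniteIndex]
    (hchar : ringChar K = 0 ∨ (ringChar K ≠ 0 ∧ ∀ g : G, ¬ (ringChar K ∣ orderOf g)))
    (d : MonoidAlgebra K G → MonoidAlgebra K G)
    (hadd : ∀ a b, d (a + b) = d a + d b)
    (hleib : ∀ a b, d (a * b) = d a * b + a * d b) :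
    ∃ b : MonoidAlgebra K G, ∀ a : MonoidAlgebra K G, d a = a * b - b * a := by
  have hK : ∀ x : K, d (algebraMap K _ x) = 0 := by
    refine derZero halg (fun x => d (algebraMap K (MonoidAlgebra K G) x)) (fun a b => ?_) (fun a b => ?_)
    · simp only [map_add, hadd]
    · simp only [map_mul, hleib]
      rw [← Algebra.commutes, ← Algebra.smul_def, ← Algebra.smul_def, add_comm]
  have hsmul : ∀ (c : K) a, d (c • a) = c • d a := fun c a => by
    rw [Algebra.smul_def, hleib, hK, zero_mul, zero_add, ← Algebra.smul_def]
  have h1 : d 1 = 0 := by rw [← map_one (algebraMap K (MonoidAlgebra K G)), hK]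
  -- orders are invertible
  have hord : ∀ g : G, (orderOf g : K) ≠ 0 := fun g hg => by
    have := (ringChar.spec K _).1 hg
    rcases hchar with h | h
    · rw [h, zero_dvd_iff] at this
      exact (htor g).orderOf_pos.ne' this
    · exact h.2 g this
  have hidx : ((Subgroup.center G).index : K) ≠ 0 := fun hg => by
    have hd := (ringChar.spec K _).1 hg
    rcases hchar with h | h
    · rw [h, zero_dvd_iff] at hd
      exact hfin.index_ne_zero hd
    · have : Fact (ringChar K).Prime :=
        ⟨(CharP.char_is_prime_or_zero K (ringChar K)).resolve_right h.1⟩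
      obtain ⟨x, hx⟩ := exists_prime_orderOf_dvd_card' (G := G ⧸ Subgroup.center G) (ringChar K) hd
      obtain ⟨g, rfl⟩ := QuotientGroup.mk'_surjective _ x
      exact h.2 g (hx ▸ orderOf_map_dvd _ g)
  let o : G →* MonoidAlgebra K G := MonoidAlgebra.of K G
  have hoi : ∀ g, o g⁻¹ * o g = 1 := fun g => by rw [← map_mul, inv_mul_cancel, map_one]
  have hio : ∀ g, o g * o g⁻¹ = 1 := fun g => by rw [← map_mul, mul_inv_cancel, map_one]
  have hzc : ∀ z ∈ Subgroup.center G, ∀ a, o z * a = a * o z := by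
    intro z hz a
    induction a using MonoidAlgebra.induction_on with
    | of g =>
      show o z * o g = o g * o z
      rw [← map_mul, ← map_mul, Subgroup.mem_center_iff.1 hz g]
    | add a b ha hb => rw [mul_add, add_mul, ha, hb]
    | smul c a ha => rw [mul_smul_comm, smul_mul_assoc, ha]
  have hz : ∀ z ∈ Subgroup.center G, d (o z) = 0 := by
    intro z hz
    have hpow : ∀ n : ℕ, o z * d (o z ^ n) = (n : K) • (o z ^ n * d (o z)) := by
      intro n
      induction n with
      | zero => simp [h1]
      | succ n ih =>
        have hc : d (o z) * o z ^ n = o z ^ n * d (o z) := by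
          rw [← map_pow, hzc _ (pow_mem hz n)]
        rw [pow_succ', hleib, mul_add, ih, hc, mul_smul_comm, Nat.cast_succ, add_smul, one_smul,
          mul_assoc, add_comm]
    have := hpow (orderOf z)
    rw [← map_pow, pow_orderOf_eq_one, map_one, h1, mul_zero, one_mul] at this
    exact (smul_eq_zero.1 this.symm).resolve_left (hord z)
  let φ : G → MonoidAlgebra K G := fun g => o g⁻¹ * d (o g)
  have hφz : ∀ g, ∀ z ∈ Subgroup.center G, φ (g * z) = φ g := by
    intro g z hzz
    show o (g * z)⁻¹ * d (o (g * z)) = o g⁻¹ * d (o g)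
    rw [map_mul o g z, hleib, hz z hzz, mul_zero, add_zero, ← hzc z hzz, mul_inv_rev,
      ← Subgroup.mem_center_iff.1 (inv_mem hzz), map_mul, mul_assoc, ← mul_assoc (o z⁻¹), hoi, one_mul]
  have hφh : ∀ g h, φ (g * h) = o h⁻¹ * φ g * o h + φ h := by
    intro g h
    show o (g * h)⁻¹ * d (o (g * h)) = o h⁻¹ * (o g⁻¹ * d (o g)) * o h + o h⁻¹ * d (o h)
    rw [map_mul o g h, hleib, mul_inv_rev, map_mul, mul_add]
    congr 1
    · simp only [mul_assoc]
    · rw [mul_assoc, ← mul_assoc (o g⁻¹), hoi, one_mul]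
  let ψ : G ⧸ Subgroup.center G → MonoidAlgebra K G := Quotient.lift φ (fun a b hab => by
    have := QuotientGroup.leftRel_apply.1 hab
    rw [← hφz a _ this, mul_inv_cancel_left])
  have : Fintype (G ⧸ Subgroup.center G) := Fintype.ofFinite _
  let S := ∑ x, ψ x
  have hS : ∀ h, o h * S - S * o h = ((Subgroup.center G).index : K) • d (o h) := by
    intro h
    have e : S = o h⁻¹ * S * o h + ((Subgroup.center G).index : K) • φ h := by
      calc S = ∑ x, ψ (x * (h : G ⧸ Subgroup.center G)) :=
            (Equiv.sum_comp (Equiv.mulRight (h : G ⧸ Subgroup.center G)) ψ).symm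
        _ = ∑ x, (o h⁻¹ * ψ x * o h + φ h) := Finset.sum_congr rfl (fun x _ => by
            induction x using QuotientGroup.induction_on with
            | H g => exact hφh g h)
        _ = _ := by
            rw [Finset.sum_add_distrib, ← Finset.sum_mul, ← Finset.mul_sum, Finset.sum_const,
              Finset.card_univ, Subgroup.index, Nat.card_eq_fintype_card, Nat.cast_smul_eq_nsmul]
    have e2 : o h * S = S * o h + ((Subgroup.center G).index : K) • d (o h) := by
      conv_lhs => rw [e]
      rw [mul_add, mul_smul_comm, ← mul_assoc, ← mul_assoc, hio, one_mul]
      show _ + _ • (o h * (o h⁻¹ * d (o h))) = _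
      rw [← mul_assoc (o h), hio, one_mul]
    rw [e2, add_sub_cancel_left]
  refine ⟨((Subgroup.center G).index : K)⁻¹ • S, fun a => ?_⟩
  induction a using MonoidAlgebra.induction_on with
  | of g =>
    show d (o g) = o g * _ - _ * o g
    rw [mul_smul_comm, smul_mul_assoc, ← smul_sub, hS, inv_smul_smul₀ hidx]
  | add a b ha hb => rw [hadd, ha, hb, mul_add, add_mul]; abel
  | smul c a ha => rw [hsmul, ha, mul_smul_comm c, smul_mul_assoc c, smul_sub]
end

section
/- Let G be a group generated by a subset S, let F_S be the free group on S, and let φ : F_S → G be the group homomorphism sending each free generator s ∈ S to the corresponding element s ∈ G. Let R be a commutative unital ring and let f : S → RG be any function into the group ring RG. Then there exists a unique function f* : F_S → RG such that f*(s) = f(s) for all s ∈ S and f*(uv) = f*(u)·φ(v) + φ(u)·f*(v) for all u, v ∈ F_S, where for g ∈ G the product with g denotes multiplication in RG by the basis element corresponding to g. -/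
/-- The unit `(g, a)` of the square-zero extension of a group ring by itself. -/
noncomputable def leibnizUnit {G : Type*} [Group G] {R : Type*} [CommRing R]
    (g : G) (a : MonoidAlgebra R G) :
    (TrivSqZeroExt (MonoidAlgebra R G) (MonoidAlgebra R G))ˣ where
  val := (MonoidAlgebra.of R G g, a)
  inv := (MonoidAlgebra.of R G g⁻¹,
    -(MonoidAlgebra.of R G g⁻¹ * a * MonoidAlgebra.of R G g⁻¹))
  val_inv := by
    have h : MonoidAlgebra.of R G g * MonoidAlgebra.of R G g⁻¹ = 1 := by
      rw [← map_mul, mul_inv_cancel, map_one]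
    apply TrivSqZeroExt.ext
    · exact h
    · change MonoidAlgebra.of R G g * -(MonoidAlgebra.of R G g⁻¹ * a * MonoidAlgebra.of R G g⁻¹)
        + a * MonoidAlgebra.of R G g⁻¹ = 0
      rw [mul_neg, ← mul_assoc, ← mul_assoc, h, one_mul, neg_add_cancel]
  inv_val := by
    have h : MonoidAlgebra.of R G g⁻¹ * MonoidAlgebra.of R G g = 1 := by
      rw [← map_mul, inv_mul_cancel, map_one]
    apply TrivSqZeroExt.ext
    · exact h
    · change MonoidAlgebra.of R G g⁻¹ * a +
        -(MonoidAlgebra.of R G g⁻¹ * a * MonoidAlgebra.of R G g⁻¹) * MonoidAlgebra.of R G g = 0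
      rw [neg_mul, mul_assoc _ _ (MonoidAlgebra.of R G g), h, mul_one, add_neg_cancel]

/-- Let `G` be a group generated by a subset `S`, let `F_S` be the free group
on `S` and `φ : F_S → G` the homomorphism sending each free generator to the corresponding
element of `G`. Let `R` be a commutative unital ring and `f : S → R G` any function into the
group ring. Then there is a unique function `f* : F_S → R G` extending `f` and satisfying
`f* (u * v) = f* u * φ v + φ u * f* v` for all `u v : F_S`. -/
theorem exists_unique_extension_generalized_leibniz {G : Type*} [Group G]
    (S : Set G) (hS : Subgroup.closure S = ⊤)
    {R : Type*} [CommRing R] (f : S → MonoidAlgebra R G) :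
    ∃! fstar : FreeGroup S → MonoidAlgebra R G,
      (∀ s : S, fstar (FreeGroup.of s) = f s) ∧
      (∀ u v : FreeGroup S,
        fstar (u * v) =
          fstar u * MonoidAlgebra.of R G (FreeGroup.lift (fun s : S => (s : G)) v) +
          MonoidAlgebra.of R G (FreeGroup.lift (fun s : S => (s : G)) u) * fstar v) := by
  let F : FreeGroup S →* (TrivSqZeroExt (MonoidAlgebra R G) (MonoidAlgebra R G))ˣ :=
    FreeGroup.lift (fun s : S => leibnizUnit (s : G) (f s))
  have hF : ∀ s : S, F (FreeGroup.of s) = leibnizUnit (s : G) (f s) := fun s =>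
    FreeGroup.lift_apply_of
  have hfst : ∀ u, (F u).val.fst =
      MonoidAlgebra.of R G (FreeGroup.lift (fun s : S => (s : G)) u) := by
    let P : FreeGroup S →* MonoidAlgebra R G :=
      ((TrivSqZeroExt.fstHom ℤ (MonoidAlgebra R G) (MonoidAlgebra R G) :
        _ →* MonoidAlgebra R G).comp (Units.coeHom _)).comp F
    let Q : FreeGroup S →* MonoidAlgebra R G :=
      (MonoidAlgebra.of R G).comp (FreeGroup.lift (fun s : S => (s : G)))
    have hPQ : P = Q := by
      apply FreeGroup.ext_hom
      intro s
      change (F (FreeGroup.of s)).val.fst =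
        MonoidAlgebra.of R G (FreeGroup.lift (fun s : S => (s : G)) (FreeGroup.of s))
      rw [hF, FreeGroup.lift_apply_of]
      rfl
    intro u
    exact DFunLike.congr_fun hPQ u
  refine ⟨fun u => (F u).val.snd, ⟨?_, ?_⟩, ?_⟩
  · intro s
    change (F (FreeGroup.of s)).val.snd = f s
    rw [hF]
    rfl
  · intro u v
    change (F (u * v)).val.snd = (F u).val.snd * _ + _ * (F v).val.snd
    rw [map_mul, Units.val_mul, TrivSqZeroExt.snd_mul, hfst, hfst, add_comm]
    rfl
  · rintro k ⟨hk, hkm⟩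
    have h1 : ∀ k : FreeGroup S → MonoidAlgebra R G, (∀ u v : FreeGroup S, k (u * v) =
          k u * MonoidAlgebra.of R G (FreeGroup.lift (fun s : S => (s : G)) v) +
          MonoidAlgebra.of R G (FreeGroup.lift (fun s : S => (s : G)) u) * k v) → k 1 = 0 := by
      intro k h
      have := h 1 1
      simp only [map_one, mul_one, one_mul] at this
      exact left_eq_add.mp this
    have hone := h1 k hkm
    funext u
    have hm : ∀ u v : FreeGroup S, (F (u * v)).val.snd = (F u).val.snd *
          MonoidAlgebra.of R G (FreeGroup.lift (fun s : S => (s : G)) v) +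
          MonoidAlgebra.of R G (FreeGroup.lift (fun s : S => (s : G)) u) * (F v).val.snd := by
      intro u v
      rw [map_mul, Units.val_mul, TrivSqZeroExt.snd_mul, hfst, hfst, add_comm]
      rfl
    have hone' := h1 (fun u => (F u).val.snd) hm
    have hs : ∀ s : S, k (FreeGroup.of s) = (F (FreeGroup.of s)).val.snd := by
      intro s
      rw [hk, hF]
      rfl
    induction u using FreeGroup.induction_on with
    | C1 => exact hone.trans hone'.symm
    | of s => exact hs s
    | inv_of s _ =>
      have a := hkm (FreeGroup.of s)⁻¹ (FreeGroup.of s)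
      have b := hm (FreeGroup.of s)⁻¹ (FreeGroup.of s)
      rw [inv_mul_cancel] at a b
      rw [hone, hs] at a
      rw [hone'] at b
      have c := add_right_cancel (a.symm.trans b)
      have hu : MonoidAlgebra.of R G (FreeGroup.lift (fun s : S => (s : G)) (FreeGroup.of s)) *
          MonoidAlgebra.of R G (FreeGroup.lift (fun s : S => (s : G)) (FreeGroup.of s))⁻¹ = 1 := by
        rw [← map_mul, mul_inv_cancel, map_one]
      have d := congrArg (· * MonoidAlgebra.of R G
        (FreeGroup.lift (fun s : S => (s : G)) (FreeGroup.of s))⁻¹) c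
      simp only [mul_assoc, hu, mul_one] at d
      exact d
    | mul x y hx hy =>
      change k (x * y) = (F (x * y)).val.snd
      rw [hkm, hm, hx, hy]
end

section
/- Let G = ⟨S ∣ T⟩ be a presented group, where S is a generating set, T ⊆ F_S is a set of relators in the free group F_S on S, and φ : F_S → G is the canonical surjection. Let R be a commutative unital ring, let f : S → RG be a function, and let f* : F_S → RG be the unique extension of f satisfying f*(uv) = f*(u)·φ(v) + φ(u)·f*(v) for all u, v ∈ F_S. Then: (1) there exists an R-derivation d of the group ring RG with d(φ(s)) = f(s) for all s ∈ S if and only if f*(t) = 0 for all t ∈ T; and (2) when such an R-derivation exists, it is unique. -/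
/-- A map `d` on the group ring `R⟨S∣T⟩` is an `R`-derivation extending `f : S → R⟨S∣T⟩`
(along the canonical surjection) if it is additive, satisfies the Leibniz rule, vanishes on
the image of `R`, and sends (the image in the group ring of) each generator `s` to `f s`. -/
def IsRDerivationExtending {S : Type*} (T : Set (FreeGroup S)) {R : Type*} [CommRing R]
    (f : S → MonoidAlgebra R (PresentedGroup T))
    (d : MonoidAlgebra R (PresentedGroup T) → MonoidAlgebra R (PresentedGroup T)) : Prop :=
  (∀ a b, d (a + b) = d a + d b) ∧
  (∀ a b, d (a * b) = d a * b + a * d b) ∧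
  (∀ r : R, d (algebraMap R (MonoidAlgebra R (PresentedGroup T)) r) = 0) ∧
  (∀ s : S, d (MonoidAlgebra.of R (PresentedGroup T) (PresentedGroup.of s)) = f s)

/-- The generalized Leibniz rule forces the value at `1` to vanish. -/
theorem leib_one {S : Type*} {T : Set (FreeGroup S)} {R : Type*} [CommRing R]
    {g : FreeGroup S → MonoidAlgebra R (PresentedGroup T)}
    (h : ∀ u v : FreeGroup S,
      g (u * v) = g u * MonoidAlgebra.of R (PresentedGroup T) (PresentedGroup.mk T v) +
        MonoidAlgebra.of R (PresentedGroup T) (PresentedGroup.mk T u) * g v) : g 1 = 0 := by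
  have := h 1 1
  rw [map_one, map_one, mul_one, mul_one, one_mul] at this
  exact left_eq_add.mp this

/-- The value at an inverse. -/
theorem leib_inv {S : Type*} {T : Set (FreeGroup S)} {R : Type*} [CommRing R]
    {g : FreeGroup S → MonoidAlgebra R (PresentedGroup T)}
    (h : ∀ u v : FreeGroup S,
      g (u * v) = g u * MonoidAlgebra.of R (PresentedGroup T) (PresentedGroup.mk T v) +
        MonoidAlgebra.of R (PresentedGroup T) (PresentedGroup.mk T u) * g v)
    (u : FreeGroup S) :
    g u⁻¹ = -(MonoidAlgebra.of R (PresentedGroup T) (PresentedGroup.mk T u⁻¹) * g u *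
      MonoidAlgebra.of R (PresentedGroup T) (PresentedGroup.mk T u⁻¹)) := by
  have h1 := h u⁻¹ u
  rw [inv_mul_cancel, leib_one h] at h1
  have h2 : MonoidAlgebra.of R (PresentedGroup T) (PresentedGroup.mk T u) *
      MonoidAlgebra.of R (PresentedGroup T) (PresentedGroup.mk T u⁻¹) = 1 := by
    rw [← map_mul, ← map_mul, mul_inv_cancel, map_one, map_one]
  have h3 := congrArg
    (· * MonoidAlgebra.of R (PresentedGroup T) (PresentedGroup.mk T u⁻¹)) h1
  simp only [zero_mul, add_mul] at h3
  rw [mul_assoc, h2, mul_one] at h3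
  exact eq_neg_of_add_eq_zero_left h3.symm

theorem leib_ext {S : Type*} {T : Set (FreeGroup S)} {R : Type*} [CommRing R]
    {g k : FreeGroup S → MonoidAlgebra R (PresentedGroup T)}
    (hg : ∀ u v : FreeGroup S,
      g (u * v) = g u * MonoidAlgebra.of R (PresentedGroup T) (PresentedGroup.mk T v) +
        MonoidAlgebra.of R (PresentedGroup T) (PresentedGroup.mk T u) * g v)
    (hk : ∀ u v : FreeGroup S,
      k (u * v) = k u * MonoidAlgebra.of R (PresentedGroup T) (PresentedGroup.mk T v) +
        MonoidAlgebra.of R (PresentedGroup T) (PresentedGroup.mk T u) * k v)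
    (hs : ∀ s, g (FreeGroup.of s) = k (FreeGroup.of s)) (u : FreeGroup S) : g u = k u := by
  induction u using FreeGroup.induction_on with
  | C1 => rw [leib_one hg, leib_one hk]
  | of s => exact hs s
  | inv_of s ih => rw [leib_inv hg, leib_inv hk]; rw [hs s]
  | mul x y hx hy => rw [hg, hk, hx, hy]

theorem deriv_apply {S : Type*} {T : Set (FreeGroup S)} {R : Type*} [CommRing R]
    {f : S → MonoidAlgebra R (PresentedGroup T)}
    {fstar : FreeGroup S → MonoidAlgebra R (PresentedGroup T)}
    (hext : ∀ s : S, fstar (FreeGroup.of s) = f s)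
    (hleib : ∀ u v : FreeGroup S,
      fstar (u * v) =
        fstar u * MonoidAlgebra.of R (PresentedGroup T) (PresentedGroup.mk T v) +
        MonoidAlgebra.of R (PresentedGroup T) (PresentedGroup.mk T u) * fstar v)
    {d : MonoidAlgebra R (PresentedGroup T) → MonoidAlgebra R (PresentedGroup T)}
    (hd : IsRDerivationExtending T f d) (u : FreeGroup S) :
    d (MonoidAlgebra.of R (PresentedGroup T) (PresentedGroup.mk T u)) = fstar u := by
  obtain ⟨_, hm, _, hf⟩ := hd
  refine leib_ext
    (g := fun u => d (MonoidAlgebra.of R (PresentedGroup T) (PresentedGroup.mk T u)))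
    (fun u v => ?_) hleib (fun s => ?_) u
  · simp only [map_mul, hm]
  · rw [hext]; exact hf s

theorem fstar_eq_zero {S : Type*} {T : Set (FreeGroup S)} {R : Type*} [CommRing R]
    {fstar : FreeGroup S → MonoidAlgebra R (PresentedGroup T)}
    (hleib : ∀ u v : FreeGroup S,
      fstar (u * v) =
        fstar u * MonoidAlgebra.of R (PresentedGroup T) (PresentedGroup.mk T v) +
        MonoidAlgebra.of R (PresentedGroup T) (PresentedGroup.mk T u) * fstar v)
    (hT : ∀ t ∈ T, fstar t = 0) (u : FreeGroup S) (hu : PresentedGroup.mk T u = 1) :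
    fstar u = 0 := by
  let N : Subgroup (FreeGroup S) :=
    { carrier := {u | PresentedGroup.mk T u = 1 ∧ fstar u = 0}
      one_mem' := ⟨map_one _, leib_one hleib⟩
      mul_mem' := by
        rintro a b ⟨ha, ha0⟩ ⟨hb, hb0⟩
        refine ⟨by rw [map_mul, ha, hb, one_mul], ?_⟩
        rw [hleib, ha0, hb0, zero_mul, mul_zero, add_zero]
      inv_mem' := by
        rintro a ⟨ha, ha0⟩
        refine ⟨by rw [map_inv, ha, inv_one], ?_⟩
        rw [leib_inv hleib, ha0, mul_zero, zero_mul, neg_zero] }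
  have hN : N.Normal := by
    constructor
    rintro n ⟨hn, hn0⟩ g
    have hg : PresentedGroup.mk T (g * n * g⁻¹) = 1 := by
      rw [map_mul, map_mul, hn, mul_one, ← map_mul, mul_inv_cancel, map_one]
    refine ⟨hg, ?_⟩
    have h1 := hleib g g⁻¹
    rw [mul_inv_cancel, leib_one hleib] at h1
    rw [hleib, hleib g n, map_mul (PresentedGroup.mk T) g n, hn, hn0, map_one, mul_one, mul_one,
      mul_zero, add_zero, ← h1]
  have hle : Subgroup.normalClosure T ≤ N :=
    Subgroup.normalClosure_le_normal fun t ht => ⟨PresentedGroup.one_of_mem ht, hT t ht⟩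
  exact (hle (PresentedGroup.mk_eq_one_iff.mp hu)).2

/-- Let `G = ⟨S ∣ T⟩` be a presented group with canonical surjection
`φ = PresentedGroup.mk T : F_S → G`, let `R` be a commutative unital ring, `f : S → R G` a
function, and `f* : F_S → R G` the (unique) extension of `f` satisfying the generalized
Leibniz rule `f* (u v) = f* u · φ v + φ u · f* v`. Then (1) `f` extends to an `R`-derivation
of `R G` if and only if `f*` vanishes on every relator `t ∈ T`, and (2) such an extension,
when it exists, is unique. -/
theorem extends_to_RDerivation_iff_and_unique {S : Type*} (T : Set (FreeGroup S))
    {R : Type*} [CommRing R]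
    (f : S → MonoidAlgebra R (PresentedGroup T))
    (fstar : FreeGroup S → MonoidAlgebra R (PresentedGroup T))
    (hext : ∀ s : S, fstar (FreeGroup.of s) = f s)
    (hleib : ∀ u v : FreeGroup S,
      fstar (u * v) =
        fstar u * MonoidAlgebra.of R (PresentedGroup T) (PresentedGroup.mk T v) +
        MonoidAlgebra.of R (PresentedGroup T) (PresentedGroup.mk T u) * fstar v) :
    ((∃ d, IsRDerivationExtending T f d) ↔ ∀ t ∈ T, fstar t = 0) ∧
    (∀ d₁ d₂, IsRDerivationExtending T f d₁ → IsRDerivationExtending T f d₂ → d₁ = d₂) := by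
  classical
  have hsurj := PresentedGroup.mk_surjective T
  refine ⟨⟨?_, fun hT => ?_⟩, fun d₁ d₂ h₁ h₂ => ?_⟩
  · rintro ⟨d, hd⟩ t ht
    rw [← deriv_apply hext hleib hd t, PresentedGroup.one_of_mem ht, map_one]
    have := hd.2.2.1 1
    rwa [map_one] at this
  · have hwd : ∀ u v, PresentedGroup.mk T u = PresentedGroup.mk T v → fstar u = fstar v := by
      intro u v huv
      have h0 : PresentedGroup.mk T (u * v⁻¹) = 1 := by
        rw [map_mul, huv, ← map_mul, mul_inv_cancel, map_one]
      have h1 := hleib (u * v⁻¹) v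
      rwa [inv_mul_cancel_right, h0, fstar_eq_zero hleib hT _ h0, zero_mul, zero_add, map_one,
        one_mul] at h1
    let D : PresentedGroup T → MonoidAlgebra R (PresentedGroup T) :=
      fun g => fstar (Function.surjInv hsurj g)
    have hD : ∀ u, D (PresentedGroup.mk T u) = fstar u := fun u =>
      hwd _ _ (Function.surjInv_eq hsurj _)
    let d : MonoidAlgebra R (PresentedGroup T) →ₗ[R] MonoidAlgebra R (PresentedGroup T) :=
      (Finsupp.lift _ R _ D).comp (MonoidAlgebra.coeffLinearEquiv R).toLinearMap
    have hd : ∀ u, d (MonoidAlgebra.of R _ (PresentedGroup.mk T u)) = fstar u := by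
      intro u
      rw [← hD]
      simp [d]
    have hmul : ∀ a b, d (a * b) = d a * b + a * d b := by
      intro a b
      induction a using MonoidAlgebra.induction_on with
      | of g =>
        induction b using MonoidAlgebra.induction_on with
        | of k =>
          obtain ⟨u, rfl⟩ := hsurj g
          obtain ⟨v, rfl⟩ := hsurj k
          rw [← map_mul, ← map_mul, hd, hd, hd, hleib]
        | add x y hx hy => rw [mul_add, map_add, hx, hy, map_add, mul_add, mul_add]; abel
        | smul r x hx => simp only [mul_smul_comm, map_smul, hx, smul_add]
      | add x y hx hy => rw [add_mul, map_add, hx, hy, map_add, add_mul, add_mul]; abel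
      | smul r x hx => simp only [smul_mul_assoc, map_smul, hx, smul_add]
    refine ⟨d, map_add d, hmul, fun r => ?_, fun s => (hd _).trans (hext s)⟩
    have h1 : d 1 = 0 := by
      have := hd 1
      rwa [map_one, map_one, leib_one hleib] at this
    rw [Algebra.algebraMap_eq_smul_one, map_smul, h1, smul_zero]
  · funext a
    induction a using MonoidAlgebra.induction_on with
    | of g =>
      obtain ⟨u, rfl⟩ := hsurj g
      rw [deriv_apply hext hleib h₁, deriv_apply hext hleib h₂]
    | add x y hx hy => rw [h₁.1, h₂.1, hx, hy]
    | smul r x hx =>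
      rw [Algebra.smul_def, h₁.2.1, h₂.2.1, h₁.2.2.1, h₂.2.2.1, hx]
end

section
/- Let F be a field of characteristic zero such that every element of F is algebraic over ℚ (e.g. F = ℚ or any algebraic extension of ℚ), and let G be a finite abelian group. Then the group algebra FG has no nonzero derivations: every derivation d : FG → FG is identically zero. -/
theorem derivation_eq_zero_of_separable_aux {A : Type*} [CommRing A] [Algebra ℚ A]
    (D : Derivation ℚ A A) (c : A) (p : Polynomial ℚ) (hp : p.Separable)
    (h : Polynomial.aeval c p = 0) : D c = 0 := by
  obtain ⟨a, b, hab⟩ := hp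
  have h1 := congrArg (Polynomial.aeval c) hab
  have h2 := D.map_aeval p c
  rw [h, map_zero, smul_eq_mul] at h2
  simp only [map_add, map_mul, h, mul_zero, zero_add, map_one] at h1
  calc D c = (Polynomial.aeval c b * Polynomial.aeval c (Polynomial.derivative p)) * D c := by
        rw [h1, one_mul]
    _ = 0 := by rw [mul_assoc, ← h2, mul_zero]

/-- Let `F` be a field of characteristic zero every element of which is
algebraic over `ℚ`, and let `G` be a finite abelian group. Then the group algebra `F G` has
no nonzero derivations. -/
theorem derivation_groupAlgebra_rat_algebraic_eq_zero {F : Type*} [Field F] [CharZero F]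
    (halg : ∀ x : F, IsAlgebraic ℚ x)
    {G : Type*} [CommGroup G] [Finite G]
    (d : MonoidAlgebra F G → MonoidAlgebra F G)
    (hadd : ∀ a b, d (a + b) = d a + d b)
    (hleib : ∀ a b, d (a * b) = d a * b + a * d b) :
    ∀ a : MonoidAlgebra F G, d a = 0 := by
  let D : Derivation ℚ (MonoidAlgebra F G) (MonoidAlgebra F G) :=
    Derivation.mk' (AddMonoidHom.toRatLinearMap (AddMonoidHom.mk' d hadd)) (by
      intro a b
      change d (a * b) = a * d b + b * d a
      rw [hleib]; ring)
  have hG : ∀ g : G, D (MonoidAlgebra.single g 1) = 0 := by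
    intro g
    have hn : Nat.card G ≠ 0 := Nat.card_pos.ne'
    refine derivation_eq_zero_of_separable_aux D _ (Polynomial.X ^ Nat.card G - Polynomial.C 1)
      (Polynomial.separable_X_pow_sub_C 1 (by exact_mod_cast hn) one_ne_zero) ?_
    simp [MonoidAlgebra.single_pow, MonoidAlgebra.one_def]
  have hF : ∀ x : F, D (algebraMap F (MonoidAlgebra F G) x) = 0 := by
    intro x
    refine derivation_eq_zero_of_separable_aux D _ (minpoly ℚ x)
      (minpoly.irreducible (halg x).isIntegral).separable ?_
    rw [Polynomial.aeval_algebraMap_apply, minpoly.aeval, map_zero]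
  intro a
  change D a = 0
  induction a using MonoidAlgebra.induction_on with
  | of g => exact hG g
  | add a b ha hb => rw [map_add, ha, hb, add_zero]
  | smul r a ha => rw [Algebra.smul_def, D.leibniz, hF, ha, smul_zero, smul_zero, add_zero]
end

section
/- Let p be a prime, let K be a finite field of characteristic p, let H be a finite abelian group with p not dividing |H|, let n ≥ 1, let m_1, …, m_n ≥ 1 be natural numbers, and let G = H × C_{p^{m_1}} × ⋯ × C_{p^{m_n}}, where C_{p^{m_i}} is the cyclic group of order p^{m_i}. For i = 1, …, n, let x_i ∈ G be the element which is the identity in H and in every cyclic factor except the i-th, where it equals a fixed generator of C_{p^{m_i}}. Then for any elements c_1, …, c_n of the group algebra KG, there exists a unique derivation d of KG with d(x_i) = c_i for all i = 1, …, n. -/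
theorem exists_deriv_aux {K G : Type*} [Field K] [CommGroup G]
    (L : G → MonoidAlgebra K G) (hL : ∀ g h, L (g * h) = L g + L h) :
    ∃ d : MonoidAlgebra K G → MonoidAlgebra K G, (∀ a b, d (a + b) = d a + d b) ∧
      (∀ a b, d (a * b) = d a * b + a * d b) ∧
      ∀ g, d (MonoidAlgebra.of K G g) = MonoidAlgebra.of K G g * L g := by
  obtain ⟨M, ha, hs⟩ : ∃ M : MonoidAlgebra K G → MonoidAlgebra K G,
      (∀ a b, M (a + b) = M a + M b) ∧
      ∀ g k, M (MonoidAlgebra.single g k) = MonoidAlgebra.single g k * L g := by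
    refine ⟨fun a => a.coeff.sum (fun g k => MonoidAlgebra.single g k * L g), ?_, ?_⟩
    · intro a b
      refine Finsupp.sum_add_index' (by simp) ?_
      intro g k l
      rw [← add_mul, MonoidAlgebra.single_add]
    · intro g k
      exact Finsupp.sum_single_index (by simp)
  have h0 : M 0 = 0 := by simpa using ha 0 0
  refine ⟨M, ha, ?_, fun g => hs g 1⟩
  intro a b
  induction a using MonoidAlgebra.induction_linear with
  | zero => simp [h0]
  | add a a' h h' => rw [add_mul, ha, ha a a', h, h']; ring
  | single g k =>
    induction b using MonoidAlgebra.induction_linear with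
    | zero => simp [h0]
    | add a a' h h' => rw [mul_add, ha, ha a a', h, h']; ring
    | single g' k' =>
      rw [MonoidAlgebra.single_mul_single, hs, hs g k, hs g' k', hL, ← MonoidAlgebra.single_mul_single]
      ring

theorem deriv_zero_aux {p : ℕ} (hp : p.Prime) {K : Type*} [Field K] [Finite K] [CharP K p]
    {H : Type*} [CommGroup H] [Finite H] (hH : ¬ p ∣ Nat.card H)
    (n : ℕ) (m : Fin n → ℕ)
    (D : Derivation ℤ (MonoidAlgebra K (H × (∀ i : Fin n, Multiplicative (ZMod (p ^ m i)))))
      (MonoidAlgebra K (H × (∀ i : Fin n, Multiplicative (ZMod (p ^ m i))))))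
    (hD : ∀ i : Fin n,
        D (MonoidAlgebra.of K (H × (∀ i : Fin n, Multiplicative (ZMod (p ^ m i))))
            ((1 : H), fun j => if j = i then Multiplicative.ofAdd (1 : ZMod (p ^ m j)) else 1))
          = 0) (a) : D a = 0 := by
  have hpc : ((p : ℕ) : K) = 0 := CharP.cast_eq_zero K p
  have hsm : ∀ (N : ℕ) (y : MonoidAlgebra K (H × (∀ i : Fin n, Multiplicative (ZMod (p ^ m i))))),
      N • y = (N : K) • y := fun N y => (Nat.cast_smul_eq_nsmul K N y).symm
  have hmul : ∀ x y, D x = 0 → D y = 0 → D (x * y) = 0 := by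
    intro x y hx hy
    rw [D.leibniz, hx, hy]; simp
  have hpow : ∀ x (k : ℕ), D x = 0 → D (x ^ k) = 0 := by
    intro x k hx
    rw [D.leibniz_pow, hx]; simp
  have hK : ∀ k : K, D (algebraMap K _ k) = 0 := by
    intro k
    have : Fintype K := Fintype.ofFinite K
    have h1 : k ^ Fintype.card K = k := FiniteField.pow_card k
    conv_lhs => rw [← h1]
    rw [map_pow, D.leibniz_pow, hsm, FiniteField.cast_card_eq_zero, zero_smul]
  have hHz : ∀ h : H, D (MonoidAlgebra.of K _ (h, 1)) = 0 := by
    intro h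
    set y := MonoidAlgebra.of K (H × (∀ i : Fin n, Multiplicative (ZMod (p ^ m i)))) (h, 1) with hy
    set N := Nat.card H with hN
    have hNK : (N : K) ≠ 0 := by rwa [Ne, CharP.cast_eq_zero_iff K p]
    have hyN : y ^ N = 1 := by
      rw [hy, ← map_pow, Prod.pow_mk, pow_card_eq_one', one_pow]
      exact map_one _
    have h2 := D.leibniz_pow y N
    rw [hyN, D.map_one_eq_zero, hsm] at h2
    have h3 : y ^ (N - 1) • D y = 0 := by
      rcases smul_eq_zero.1 h2.symm with h | h
      · exact absurd h hNK
      · exact h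
    have hN1 : N - 1 + 1 = N := Nat.sub_add_cancel Nat.card_pos
    calc D y = y ^ N * D y := by rw [hyN, one_mul]
      _ = y * (y ^ (N - 1) • D y) := by rw [← hN1, pow_succ', Nat.add_sub_cancel, smul_eq_mul, mul_assoc]
      _ = 0 := by rw [h3, mul_zero]
  have hF : ∀ f : (∀ i : Fin n, Multiplicative (ZMod (p ^ m i))),
      D (MonoidAlgebra.of K (H × (∀ i : Fin n, Multiplicative (ZMod (p ^ m i)))) (1, f)) = 0 := by
    intro f
    have : NeZero p := ⟨hp.ne_zero⟩
    have hf : ((1 : H), f) = ∏ i : Fin n, ((1 : H), fun j => if j = i then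
        Multiplicative.ofAdd (1 : ZMod (p ^ m j)) else 1) ^ (ZMod.val (Multiplicative.toAdd (f i))) := by
      refine Prod.ext ?_ ?_
      · simp [Prod.fst_prod]
      · rw [Prod.snd_prod]
        funext j
        rw [Finset.prod_apply, Finset.prod_eq_single j]
        · simp only [Prod.pow_snd, Pi.pow_apply, if_true]
          rw [← ofAdd_nsmul]
          simp
        · intro b _ hb
          simp [Ne.symm hb]
        · simp
    rw [hf, map_prod]
    refine Finset.prod_induction _ (fun x => D x = 0) hmul D.map_one_eq_zero ?_
    intro i _
    rw [map_pow]
    exact hpow _ _ (hD i)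
  induction a using MonoidAlgebra.induction_linear with
  | zero => simp
  | add a b h h' => rw [map_add, h, h', add_zero]
  | single g k =>
    have : MonoidAlgebra.single g k = algebraMap K _ k * (MonoidAlgebra.of K _ (g.1, 1) *
      MonoidAlgebra.of K _ (1, g.2)) := by
      rw [← map_mul]
      simp [MonoidAlgebra.single_mul_single]
    rw [this]
    exact hmul _ _ (hK k) (hmul _ _ (hHz _) (hF _))



/-- Let `p` be a prime, `K` a finite field of characteristic `p`, `H` a
finite abelian group with `p ∤ |H|`, `n ≥ 1` and `m₁, …, mₙ ≥ 1`, and let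
`G = H × C_{p^{m₁}} × ⋯ × C_{p^{mₙ}}`. Let `xᵢ ∈ G` be the element which is the identity
everywhere except in the `i`-th cyclic factor, where it is a fixed generator. Then for any
`c₁, …, cₙ` in the group algebra `K G` there is a unique derivation `d` of `K G` with
`d xᵢ = cᵢ` for all `i`. -/
theorem existsUnique_derivation_of_values_on_generators (p : ℕ) (hp : p.Prime)
    {K : Type*} [Field K] [Finite K] [CharP K p]
    {H : Type*} [CommGroup H] [Finite H] (hH : ¬ p ∣ Nat.card H)
    (n : ℕ) (hn : 1 ≤ n) (m : Fin n → ℕ) (hm : ∀ i, 1 ≤ m i)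
    (c : Fin n → MonoidAlgebra K (H × (∀ i : Fin n, Multiplicative (ZMod (p ^ m i))))) :
    ∃! d : MonoidAlgebra K (H × (∀ i : Fin n, Multiplicative (ZMod (p ^ m i)))) →
           MonoidAlgebra K (H × (∀ i : Fin n, Multiplicative (ZMod (p ^ m i)))),
      (∀ a b, d (a + b) = d a + d b) ∧
      (∀ a b, d (a * b) = d a * b + a * d b) ∧
      (∀ i : Fin n,
        d (MonoidAlgebra.of K (H × (∀ i : Fin n, Multiplicative (ZMod (p ^ m i))))
            ((1 : H), fun j => if j = i then Multiplicative.ofAdd (1 : ZMod (p ^ m j)) else 1))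
          = c i) := by

  have : NeZero p := ⟨hp.ne_zero⟩
  set X : Fin n → H × (∀ i : Fin n, Multiplicative (ZMod (p ^ m i))) := fun i =>
    ((1 : H), fun j => if j = i then Multiplicative.ofAdd (1 : ZMod (p ^ m j)) else 1) with hX
  have hdvd : ∀ i, p ∣ p ^ m i := fun i => dvd_pow_self p (by have := hm i; omega)
  let lam : Fin n → H × (∀ i : Fin n, Multiplicative (ZMod (p ^ m i))) → K := fun i g =>
    ZMod.castHom (hdvd i) K (Multiplicative.toAdd (g.2 i))
  have hlam : ∀ i g h, lam i (g * h) = lam i g + lam i h := by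
    intro i g h
    simp only [lam, Prod.snd_mul, Pi.mul_apply, toAdd_mul, map_add]
  have hlamX : ∀ i j, lam i (X j) = if i = j then 1 else 0 := by
    intro i j
    by_cases h : i = j
    · simp only [lam, hX, h, if_true, toAdd_ofAdd, map_one]
    · simp only [lam, hX, h, if_false, toAdd_one, map_zero]
  obtain ⟨d, hd1, hd2, hd3⟩ := exists_deriv_aux (K := K)
    (fun g : H × (∀ i : Fin n, Multiplicative (ZMod (p ^ m i))) =>
      ∑ i, lam i g • (MonoidAlgebra.of K _ (X i)⁻¹ * c i)) (by
      intro g h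
      simp only [hlam, add_smul, Finset.sum_add_distrib])
  have hdc : ∀ i, d (MonoidAlgebra.of K _ (X i)) = c i := by
    intro i
    rw [hd3]
    simp only [hlamX, ite_smul, one_smul, zero_smul, Finset.sum_ite_eq', Finset.mem_univ, if_true]
    rw [← mul_assoc, ← map_mul, mul_inv_cancel, map_one, one_mul]
  refine ⟨d, ⟨hd1, hd2, hdc⟩, ?_⟩
  rintro e ⟨he1, he2, hec⟩
  let D : Derivation ℤ (MonoidAlgebra K (H × (∀ i : Fin n, Multiplicative (ZMod (p ^ m i)))))
      (MonoidAlgebra K (H × (∀ i : Fin n, Multiplicative (ZMod (p ^ m i))))) :=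
    Derivation.mk' (AddMonoidHom.toIntLinearMap (AddMonoidHom.mk' (fun a => e a - d a) (by
      intro a b
      rw [he1, hd1]; ring))) (by
      intro a b
      change e (a * b) - d (a * b) = a * (e b - d b) + b * (e a - d a)
      rw [he2, hd2]; ring)
  funext a
  refine sub_eq_zero.1 (deriv_zero_aux hp hH n m D ?_ a)
  intro i
  exact sub_eq_zero.2 ((hec i).trans (hdc i).symm)
end

section
/- Let p be a prime, let K be a finite field of characteristic p, let H be a finite abelian group with p not dividing |H|, let n ≥ 1, let m_1, …, m_n ≥ 1 be natural numbers, and let G = H × C_{p^{m_1}} × ⋯ × C_{p^{m_n}}, where C_{p^{m_i}} is the cyclic group of order p^{m_i}. Then the set Der(KG) of derivations of the group algebra KG is a K-vector space of dimension n · |G|. -/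
/-- The `K`-subspace of `K`-linear endomorphisms of a `K`-algebra `A` satisfying the Leibniz
rule, i.e. the space `Der(A)` of (`K`-linear) derivations of `A`. -/
def DerSub (K A : Type*) [CommSemiring K] [Ring A] [Algebra K A] :
    Submodule K (A →ₗ[K] A) where
  carrier := {d | ∀ a b : A, d (a * b) = d a * b + a * d b}
  zero_mem' := by intro a b; simp
  add_mem' := by
    intro d e hd he a b
    simp only [LinearMap.add_apply, hd a b, he a b, add_mul, mul_add]
    abel
  smul_mem' := by
    intro c d hd a b
    simp only [LinearMap.smul_apply, hd a b, smul_add, smul_mul_assoc, mul_smul_comm]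

open MonoidAlgebra in
lemma exists_derSub_of_hom {K G : Type*} [Field K] [CommGroup G] (φ : G → MonoidAlgebra K G)
    (hφ : ∀ g h, φ (g * h) = φ g + φ h) :
    ∃ d ∈ DerSub K (MonoidAlgebra K G), ∀ g, d (single g 1) = φ g * single g 1 := by
  let d : MonoidAlgebra K G →ₗ[K] MonoidAlgebra K G :=
    (MonoidAlgebra.basis G K).constr K (fun g => φ g * single g 1)
  have hd : ∀ g, d (single g 1) = φ g * single g 1 := fun g => by
    rw [← MonoidAlgebra.basis_apply]
    exact Module.Basis.constr_basis _ _ _ _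
  refine ⟨d, ?_, hd⟩
  have hs : ∀ (g : G) (c : K), (single g c : MonoidAlgebra K G) = c • single g 1 := by
    intro g c; simp
  intro a b
  induction a using MonoidAlgebra.induction_linear with
  | zero => simp
  | add x y hx hy => simp only [add_mul, map_add, hx, hy]; ring
  | single g c =>
    induction b using MonoidAlgebra.induction_linear with
    | zero => simp
    | add x y hx hy => simp only [mul_add, map_add, hx, hy]; ring
    | single h e =>
      rw [hs g c, hs h e]
      simp only [map_smul, smul_mul_assoc, mul_smul_comm]
      rw [← smul_add, ← smul_add]
      have : (single g 1 * single h 1 : MonoidAlgebra K G) = single (g * h) 1 := by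
        simp [single_mul_single]
      rw [this, hd, hd, hd, hφ, ← this]
      congr 2
      ring

lemma derSub_pow {K A : Type*} [Field K] [CommRing A] [Algebra K A] {d : A →ₗ[K] A}
    (hd : ∀ a b : A, d (a * b) = d a * b + a * d b) (a : A) (k : ℕ) :
    d (a ^ (k + 1)) = ((k + 1 : ℕ) : A) * a ^ k * d a := by
  induction k with
  | zero => simp
  | succ k ih => rw [pow_succ, hd, ih]; push_cast; ring

open MonoidAlgebra in
/-- Let `p` be a prime, `K` a finite field of characteristic `p`, `H` a
finite abelian group with `p ∤ |H|`, `n ≥ 1` and `m₁, …, mₙ ≥ 1`, and let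
`G = H × C_{p^{m₁}} × ⋯ × C_{p^{mₙ}}`. Then the space `Der(K G)` of derivations of the group
algebra `K G` is a `K`-vector space of dimension `n · |G|`. -/
theorem finrank_derivations_finite_abelian_groupAlgebra (p : ℕ) (hp : p.Prime)
    {K : Type*} [Field K] [Finite K] [CharP K p]
    {H : Type*} [CommGroup H] [Finite H] (hH : ¬ p ∣ Nat.card H)
    (n : ℕ) (hn : 1 ≤ n) (m : Fin n → ℕ) (hm : ∀ i, 1 ≤ m i) :
    Module.finrank K
        (DerSub K (MonoidAlgebra K (H × (∀ i : Fin n, Multiplicative (ZMod (p ^ m i)))))) =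
      n * Nat.card (H × (∀ i : Fin n, Multiplicative (ZMod (p ^ m i)))) := by
  classical
  set G := H × (∀ i : Fin n, Multiplicative (ZMod (p ^ m i))) with hG
  have : Fact p.Prime := ⟨hp⟩
  have : ∀ i, NeZero (p ^ m i) := fun i => ⟨pow_ne_zero _ hp.ne_zero⟩
  have : ∀ i, Finite (Multiplicative (ZMod (p ^ m i))) := fun i =>
    inferInstanceAs (Finite (ZMod (p ^ m i)))
  have hfin : Finite G := by rw [hG]; infer_instance
  let g : Fin n → G := fun i => (1, Pi.mulSingle i (Multiplicative.ofAdd 1))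
  let Φ : DerSub K (MonoidAlgebra K G) →ₗ[K] (Fin n → MonoidAlgebra K G) :=
    LinearMap.pi fun i =>
      (LinearMap.applyₗ (single (g i) 1 : MonoidAlgebra K G)).comp (Submodule.subtype _)
  have hΦ : ∀ d i, Φ d i = d.1 (single (g i) 1) := fun d i => rfl
  have hinj : Function.Injective Φ := by
    rw [injective_iff_map_eq_zero]
    rintro ⟨d, hd⟩ h0
    have h1 : ∀ i, d (single (g i) 1) = 0 := fun i => congrFun h0 i
    replace hd : ∀ a b, d (a * b) = d a * b + a * d b := hd
    have hone : d 1 = 0 := by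
      have := hd 1 1
      simpa using this
    let S : Submonoid G :=
      { carrier := {x | d (single x 1) = 0}
        one_mem' := by simpa [one_def] using hone
        mul_mem' := by
          intro x y hx hy
          have hx' : d (single x 1) = 0 := hx
          have hy' : d (single y 1) = 0 := hy
          have : (single (x * y) 1 : MonoidAlgebra K G) = single x 1 * single y 1 := by
            simp [single_mul_single]
          change d (single (x * y) 1) = 0
          rw [this, hd, hx', hy']; simp }
    have hSH : ∀ h : H, ((h, 1) : G) ∈ S := by
      intro h
      change d (single ((h, 1) : G) 1) = 0
      obtain ⟨k, hk⟩ : ∃ k, Nat.card H = k + 1 :=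
        Nat.exists_eq_succ_of_ne_zero Nat.card_pos.ne'
      have e1 := derSub_pow hd (single ((h, 1) : G) 1) k
      have e2 : (single ((h, 1) : G) 1 : MonoidAlgebra K G) ^ (k + 1) = 1 := by
        rw [single_pow, ← hk, Prod.pow_mk, pow_card_eq_one']
        rw [one_def, one_pow, one_pow]
        rfl
      rw [e2, hone] at e1
      have hu1 : IsUnit (((k + 1 : ℕ) : MonoidAlgebra K G)) := by
        have : ((k + 1 : ℕ) : K) ≠ 0 := by
          rw [Ne, CharP.cast_eq_zero_iff K p, ← hk]; exact hH
        simpa only [map_natCast] using (this.isUnit).map (algebraMap K (MonoidAlgebra K G))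
      have hu2 : IsUnit ((single ((h, 1) : G) 1 : MonoidAlgebra K G) ^ k) :=
        (IsUnit.of_mul_eq_one _ (by rw [← pow_succ']; exact e2)).pow k
      exact (hu1.mul hu2).mul_right_eq_zero.1 e1.symm
    have hSg : ∀ i, g i ∈ S := h1
    have hSP : ∀ y : (∀ i : Fin n, Multiplicative (ZMod (p ^ m i))), ((1, y) : G) ∈ S := by
      intro y
      let T := S.comap (MonoidHom.inr H (∀ i : Fin n, Multiplicative (ZMod (p ^ m i))))
      change y ∈ T
      refine Submonoid.pi_mem_of_mulSingle_mem y fun i => ?_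
      have : Pi.mulSingle i (y i) = (Pi.mulSingle i (Multiplicative.ofAdd 1) :
          ∀ i : Fin n, Multiplicative (ZMod (p ^ m i))) ^ (y i).toAdd.val := by
        rw [← Pi.mulSingle_pow, ← ofAdd_nsmul]
        simp
      rw [this]
      exact T.pow_mem (hSg i) _
    have hSall : ∀ x : G, x ∈ S := by
      rintro ⟨h, y⟩
      have e : ((h, y) : G) = ((h, 1) : G) * ((1, y) : G) :=
        Prod.ext (mul_one h).symm (one_mul y).symm
      rw [e]
      exact S.mul_mem (hSH h) (hSP y)
    have : d = 0 := by
      refine (MonoidAlgebra.basis G K).ext fun x => ?_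
      rw [MonoidAlgebra.basis_apply]
      exact hSall x
    simp [this]
  have hsurj : Function.Surjective Φ := by
    intro v
    have hdvd : ∀ i, p ∣ p ^ m i := fun i => dvd_pow_self p (by have := hm i; omega)
    obtain ⟨d, hd, hd'⟩ := exists_derSub_of_hom (K := K) (G := G)
      (fun x => ∑ i, (ZMod.castHom (hdvd i) K (x.2 i).toAdd) • (v i * single (g i)⁻¹ 1)) (by
        intro x y
        rw [← Finset.sum_add_distrib]
        refine Finset.sum_congr rfl fun i _ => ?_
        have e : ((x * y).2 i).toAdd = (x.2 i).toAdd + (y.2 i).toAdd := rfl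
        rw [e, map_add, add_smul])
    refine ⟨⟨d, hd⟩, ?_⟩
    funext j
    rw [hΦ]
    change d _ = _
    rw [hd', Finset.sum_eq_single j]
    · have e : ((g j).2 j).toAdd = 1 := by simp [g]
      rw [e, map_one, one_smul, mul_assoc, single_mul_single, inv_mul_cancel, mul_one,
        ← one_def, mul_one]
    · intro i _ hij
      simp [g, Pi.mulSingle_eq_of_ne hij]
    · simp
  rw [(LinearEquiv.ofBijective Φ ⟨hinj, hsurj⟩).finrank_eq]
  have := Fintype.ofFinite G
  have : Module.Free K (MonoidAlgebra K G) := .of_basis (MonoidAlgebra.basis G K)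
  have : Module.Finite K (MonoidAlgebra K G) := .of_basis (MonoidAlgebra.basis G K)
  rw [Module.finrank_pi_fintype]
  rw [Nat.card_eq_fintype_card (α := G)]
  simp [Module.finrank_eq_card_basis (MonoidAlgebra.basis G K)]
end

section
/- Let n > 2 be an integer, let m ≥ 1, and let K = F_{2^m} be a finite field with 2^m elements. Let C(y) and C(xy) denote the centralizers in the group algebra K D_{2n} of the elements y and xy of the dihedral group D_{2n}. Then C(y) and C(xy) are K-subspaces of K D_{2n}, each of dimension 2⌊n/2⌋ + 2 (that is, n + 2 when n is even and n + 1 when n is odd). -/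
open DihedralGroup in
/-- Coefficientwise description of the centralizer of a reflection. -/
theorem mem_centralizer_sr_iff (n : ℕ) {K : Type*} [Field K] (c : ZMod n)
    (f : MonoidAlgebra K (DihedralGroup n)) :
    f ∈ Subalgebra.centralizer K
          ({MonoidAlgebra.of K (DihedralGroup n) (sr c)} :
            Set (MonoidAlgebra K (DihedralGroup n))) ↔
    (∀ i, f.coeff (r (-i)) = f.coeff (r i)) ∧
      (∀ i, f.coeff (sr (c + -i)) = f.coeff (sr (c + i))) := by
  rw [Subalgebra.mem_centralizer_iff]
  simp only [Set.mem_singleton_iff, forall_eq, MonoidAlgebra.of_apply]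
  constructor
  · intro h
    have h' : ∀ g, f.coeff ((sr c)⁻¹ * g) = f.coeff (g * (sr c)⁻¹) := by
      intro g
      have := congrArg (fun z : MonoidAlgebra K (DihedralGroup n) => z.coeff g) h
      simpa only [MonoidAlgebra.coeff_single_mul_apply, MonoidAlgebra.coeff_mul_single_apply,
        one_mul, mul_one] using this
    constructor
    · intro i
      have := h' (sr (c - i))
      simp only [inv_sr, sr_mul_sr] at this
      convert this using 3 <;> ring
    · intro i
      have := h' (r i)
      simp only [inv_sr, sr_mul_r, r_mul_sr] at this
      rw [this]
      congr 2
      ring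
  · rintro ⟨h1, h2⟩
    ext g
    rw [MonoidAlgebra.coeff_single_mul_apply, MonoidAlgebra.coeff_mul_single_apply, one_mul,
      mul_one]
    rcases g with i | i
    · simp only [inv_sr, sr_mul_r, r_mul_sr]
      rw [← h2 i, sub_eq_add_neg]
    · simp only [inv_sr, sr_mul_sr]
      rw [← h1, neg_sub]

open DihedralGroup in
theorem finrank_centralizer_sr (n : ℕ) [NeZero n] {K : Type*} [Field K] (c : ZMod n) :
    Module.finrank K
        (Subalgebra.centralizer K
          ({MonoidAlgebra.of K (DihedralGroup n) (sr c)} :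
            Set (MonoidAlgebra K (DihedralGroup n)))) = 2 * (n / 2) + 2 := by
  classical
  let q : ZMod n → Fin (n / 2 + 1) := fun i =>
    ⟨i.valMinAbs.natAbs, Nat.lt_succ_of_le (ZMod.natAbs_valMinAbs_le i)⟩
  have hq_neg : ∀ i, q (-i) = q i := fun i => Fin.ext (ZMod.natAbs_valMinAbs_neg i)
  have hq_cast : ∀ k : Fin (n / 2 + 1), q ((k : ℕ) : ZMod n) = k := fun k => by
    apply Fin.ext
    simp only [q]
    rw [ZMod.valMinAbs_natCast_of_le_half (Nat.le_of_lt_succ k.2), Int.natAbs_natCast]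
  have hcast : ∀ i : ZMod n, ((q i : ℕ) : ZMod n) = i ∨ ((q i : ℕ) : ZMod n) = -i := fun i => by
    simp only [q]
    rw [ZMod.natCast_natAbs_valMinAbs]
    split_ifs <;> simp
  let mk : (Fin (n / 2 + 1) ⊕ Fin (n / 2 + 1) → K) → MonoidAlgebra K (DihedralGroup n) :=
    fun h => MonoidAlgebra.coeffEquiv.symm (Finsupp.equivFunOnFinite.symm (fun g => match g with
      | r i => h (Sum.inl (q i))
      | sr i => h (Sum.inr (q (i - c)))))
  have mk_r : ∀ h i, (mk h).coeff (r i) = h (Sum.inl (q i)) := fun h i => rfl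
  have mk_sr : ∀ h i, (mk h).coeff (sr i) = h (Sum.inr (q (i - c))) := fun h i => rfl
  let e : (Subalgebra.centralizer K
          ({MonoidAlgebra.of K (DihedralGroup n) (sr c)} :
            Set (MonoidAlgebra K (DihedralGroup n)))) ≃ₗ[K]
      (Fin (n / 2 + 1) ⊕ Fin (n / 2 + 1) → K) :=
    { toFun := fun f => Sum.elim (fun k => f.1.coeff (r ((k : ℕ) : ZMod n)))
        (fun k => f.1.coeff (sr (c + ((k : ℕ) : ZMod n))))
      map_add' := by
        intro f g
        ext (k | k) <;> simp
      map_smul' := by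
        intro a f
        ext (k | k) <;> simp
      invFun := fun h => ⟨mk h, by
        rw [mem_centralizer_sr_iff]
        refine ⟨fun i => ?_, fun i => ?_⟩
        · rw [mk_r, mk_r, hq_neg]
        · rw [mk_sr, mk_sr, add_sub_cancel_left, add_sub_cancel_left, hq_neg]⟩
      left_inv := by
        rintro ⟨f, hf⟩
        rw [mem_centralizer_sr_iff] at hf
        apply Subtype.ext
        ext (i | i)
        · rw [mk_r]
          simp only [Sum.elim_inl]
          rcases hcast i with h | h <;> rw [h]
          exact hf.1 i
        · rw [mk_sr]
          simp only [Sum.elim_inr]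
          rcases hcast (i - c) with h | h <;> rw [h]
          · rw [add_sub_cancel]
          · rw [hf.2, add_sub_cancel]
      right_inv := by
        intro h
        ext (k | k)
        · simp only [Sum.elim_inl]
          rw [mk_r, hq_cast]
        · simp only [Sum.elim_inr]
          rw [mk_sr, add_sub_cancel_left, hq_cast] }
  rw [e.finrank_eq, Module.finrank_fintype_fun_eq_card, Fintype.card_sum, Fintype.card_fin]
  ring



open DihedralGroup in
/-- Let `n > 2` and let `K` be a finite field with `2 ^ m` elements
(`m ≥ 1`). The centralizers `C(y)` and `C(xy)` in the group algebra `K D_{2n}` of the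
elements `y = sr 0` and `x * y = r 1 * sr 0` of the dihedral group of order `2n` are
`K`-subspaces of `K D_{2n}` of dimension `2⌊n/2⌋ + 2` each. -/
theorem finrank_centralizers_groupAlgebra_dihedral (n : ℕ) (hn : 2 < n)
    (m : ℕ) (hm : 1 ≤ m) {K : Type*} [Field K] [Fintype K] (hK : Fintype.card K = 2 ^ m) :
    Module.finrank K
        (Subalgebra.centralizer K
          ({MonoidAlgebra.of K (DihedralGroup n) (sr 0)} :
            Set (MonoidAlgebra K (DihedralGroup n)))) = 2 * (n / 2) + 2 ∧
    Module.finrank K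
        (Subalgebra.centralizer K
          ({MonoidAlgebra.of K (DihedralGroup n) (r 1 * sr 0)} :
            Set (MonoidAlgebra K (DihedralGroup n)))) = 2 * (n / 2) + 2 := by
  haveI : NeZero n := ⟨by omega⟩
  rw [r_mul_sr]
  exact ⟨finrank_centralizer_sr n 0, finrank_centralizer_sr n (0 - 1)⟩
end

section
/- Let n > 2 be an even integer, let m ≥ 1, and let K = F_{2^m} be a finite field with 2^m elements. Then the set Der(K D_{2n}) of derivations of the group algebra of the dihedral group D_{2n} of order 2n is a K-vector space of dimension 2n + 4. -/
open MonoidAlgebra DihedralGroup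

section DihedralHom

variable {n : ℕ} [NeZero n] {B : Type*} [Monoid B]

lemma dihPow_add (R : B) (hR : R ^ n = 1) (i j : ZMod n) :
    R ^ (i + j).val = R ^ i.val * R ^ j.val := by
  rw [ZMod.val_add, ← pow_eq_pow_mod _ hR, pow_add]

lemma dihPow_conj (R S : B) (h : R * S * R = S) (i : ℕ) : R ^ i * S * R ^ i = S := by
  induction i with
  | zero => simp
  | succ k ih =>
    rw [pow_succ, mul_assoc (R ^ k), (Commute.pow_self R k).eq]
    calc R ^ k * (R * S) * (R * R ^ k) = R ^ k * (R * S * R) * R ^ k := by simp only [mul_assoc]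
      _ = S := by rw [h, ih]

/-- The map out of the dihedral group determined by images of the generators. -/
def dihFun (R S : B) : DihedralGroup n → B
  | r i => R ^ i.val
  | sr i => S * R ^ i.val

/-- The homomorphism out of the dihedral group determined by images of the generators. -/
def dihHom (R S : B) (hR : R ^ n = 1) (hS : S * S = 1) (h : R * S * R = S) :
    DihedralGroup n →* B where
  toFun := dihFun R S
  map_one' := by
    rw [one_def]; simp [dihFun]
  map_mul' := by
    rintro (i | i) (j | j)
    · simp only [r_mul_r, dihFun, dihPow_add R hR]
    · simp only [r_mul_sr, dihFun]
      conv_rhs => rw [show j = i + (j - i) by ring, dihPow_add R hR]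
      rw [← mul_assoc, ← mul_assoc, dihPow_conj R S h]
    · simp only [sr_mul_r, dihFun, dihPow_add R hR, mul_assoc]
    · simp only [sr_mul_sr, dihFun]
      conv_rhs => rw [show j = i + (j - i) by ring, dihPow_add R hR]
      rw [show S * R ^ i.val * (S * (R ^ i.val * R ^ (j - i).val))
        = S * (R ^ i.val * S * R ^ i.val) * R ^ (j - i).val by simp only [mul_assoc],
        dihPow_conj R S h, hS, one_mul]

end DihedralHom

section Der

variable {n : ℕ} {K : Type*} [Field K]

lemma r_half_central {k : ℕ} (hk : n = k + k) (a : MonoidAlgebra K (DihedralGroup n)) :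
    (single (r (1 : ZMod n)) (1 : K)) ^ k * a = a * (single (r (1 : ZMod n)) (1 : K)) ^ k := by
  have hkk : (k : ZMod n) + k = 0 := by
    have := ZMod.natCast_self n
    rw [← Nat.cast_add, ← hk, this]
  have hneg : -(k : ZMod n) = k := by linear_combination -hkk
  rw [MonoidAlgebra.single_pow, r_one_pow, one_pow]
  ext g
  rw [coeff_single_mul_apply, coeff_mul_single_apply]
  rcases g with j | j
  · simp [add_comm]
  · simp [hneg, sub_eq_add_neg]

/-- The group algebra of the dihedral group. -/
abbrev DA (K : Type*) [Field K] (n : ℕ) := MonoidAlgebra K (DihedralGroup n)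

/-- Existence of a derivation with prescribed values on generators. -/
lemma exists_der [NeZero n] [CharP K 2] {k : ℕ} (hk : n = k + k)
    (u v : MonoidAlgebra K (DihedralGroup n))
    (h1 : single (sr (0 : ZMod n)) (1 : K) * v + v * single (sr (0 : ZMod n)) (1 : K) = 0)
    (h2 : u * single (sr (1 : ZMod n)) (1 : K)
      + single (r (1 : ZMod n)) (1 : K) * v * single (r (1 : ZMod n)) (1 : K)
      + single (sr (-1 : ZMod n)) (1 : K) * u = v) :
    ∃ d ∈ DerSub K (MonoidAlgebra K (DihedralGroup n)),
      d (single (r (1 : ZMod n)) (1 : K)) = u ∧ d (single (sr (0 : ZMod n)) (1 : K)) = v := by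
  let B := TrivSqZeroExt (DA K n) (DA K n)
  set x : DA K n := single (r (1 : ZMod n)) (1 : K) with hx
  set y : DA K n := single (sr (0 : ZMod n)) (1 : K) with hy
  have hxn : x ^ n = 1 := by
    rw [hx, MonoidAlgebra.single_pow, r_one_pow_n, one_pow]; rfl
  have hyy : y * y = 1 := by
    rw [hy, single_mul_single, sr_mul_self, one_mul]; rfl
  have hxyx : x * y * x = y := by
    rw [hx, hy, single_mul_single, single_mul_single]; simp
  have hyx : single (sr (1 : ZMod n)) (1 : K) = y * x := by
    rw [hx, hy, single_mul_single]; simp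
  have hxy : single (sr (-1 : ZMod n)) (1 : K) = x * y := by
    rw [hx, hy, single_mul_single]; simp
  rw [hyx, hxy] at h2
  have h2A : ∀ a : DA K n, a + a = 0 := by
    intro a
    ext g
    rw [coeff_add, Finsupp.add_apply, CharTwo.add_self_eq_zero]; rfl
  let R : B := (x, u)
  let S : B := (y, v)
  have hRf : R.fst = x := rfl
  have hSf : S.fst = y := rfl
  have hRs : R.snd = u := rfl
  have hSs : S.snd = v := rfl
  have hR : R ^ n = 1 := by
    apply TrivSqZeroExt.ext
    · rw [TrivSqZeroExt.fst_pow, hRf, hxn]; rfl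
    · rw [show R ^ n = R ^ (k + k) from congrArg (fun t => R ^ t) hk, pow_add, TrivSqZeroExt.snd_mul, TrivSqZeroExt.fst_pow, hRf, TrivSqZeroExt.snd_one,
        smul_eq_mul, op_smul_eq_mul, r_half_central hk, h2A]
  have hS : S * S = 1 := by
    apply TrivSqZeroExt.ext
    · rw [TrivSqZeroExt.fst_mul, hSf, hyy]; rfl
    · rw [TrivSqZeroExt.snd_mul, hSf, hSs, TrivSqZeroExt.snd_one, smul_eq_mul, op_smul_eq_mul, h1]
  have hRSR : R * S * R = S := by
    apply TrivSqZeroExt.ext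
    · rw [TrivSqZeroExt.fst_mul, TrivSqZeroExt.fst_mul, hRf, hSf, hxyx]
    · rw [TrivSqZeroExt.snd_mul, TrivSqZeroExt.snd_mul, TrivSqZeroExt.fst_mul, hRf, hSf, hSs, hRs,
        smul_eq_mul, op_smul_eq_mul, smul_eq_mul, op_smul_eq_mul]
      conv_rhs => rw [← h2]
      noncomm_ring
  let F : DA K n →ₐ[K] B := MonoidAlgebra.lift K B (DihedralGroup n) (dihHom R S hR hS hRSR)
  have hFr : ∀ i : ZMod n, F (single (r i) 1) = R ^ i.val := by
    intro i
    change MonoidAlgebra.lift K B (DihedralGroup n) (dihHom R S hR hS hRSR) _ = _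
    rw [MonoidAlgebra.lift_single, one_smul]; rfl
  have hFs : ∀ i : ZMod n, F (single (sr i) 1) = S * R ^ i.val := by
    intro i
    change MonoidAlgebra.lift K B (DihedralGroup n) (dihHom R S hR hS hRSR) _ = _
    rw [MonoidAlgebra.lift_single, one_smul]; rfl
  have hxp : ∀ i : ZMod n, x ^ i.val = single (r i) 1 := by
    intro i
    rw [hx, MonoidAlgebra.single_pow, r_one_pow, one_pow]; simp
  have hfst : ∀ a, (F a).fst = a := by
    have : (TrivSqZeroExt.fstHom K (DA K n) (DA K n)).comp F = AlgHom.id K (DA K n) := by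
      apply MonoidAlgebra.algHom_ext
      · rintro (i | i)
        · rw [AlgHom.comp_apply, hFr]
          change (R ^ i.val).fst = _
          rw [TrivSqZeroExt.fst_pow, hRf, hxp]; rfl
        · rw [AlgHom.comp_apply, hFs]
          change (S * R ^ i.val).fst = _
          rw [TrivSqZeroExt.fst_mul, TrivSqZeroExt.fst_pow, hRf, hxp, hSf, hy, single_mul_single]
          simp only [sr_mul_r, zero_add, mul_one]; rfl
      · ext
    intro a
    exact congrArg (fun f => f a) this
  let d : DA K n →ₗ[K] DA K n :=
    { toFun := fun a => (F a).snd
      map_add' := fun a b => by rw [map_add]; rfl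
      map_smul' := fun c a => by rw [map_smul]; rfl }
  have hp : ∀ i : ZMod n, F (x ^ i.val) = R ^ i.val := fun i => by rw [hxp, hFr]
  refine ⟨d, ?_, ?_, ?_⟩
  · intro a b
    change (F (a * b)).snd = (F a).snd * b + a * (F b).snd
    rw [map_mul, TrivSqZeroExt.snd_mul, hfst, hfst, smul_eq_mul, op_smul_eq_mul, add_comm]
  · change (F x).snd = u
    rw [hx, hFr]
    have : R ^ (1 : ZMod n).val = R := by
      rw [ZMod.val_one_eq_one_mod, ← pow_eq_pow_mod _ hR, pow_one]
    rw [this, hRs]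
  · change (F y).snd = v
    rw [hy, hFs]
    simp [hSs]

lemma der_eq_zero [NeZero n] (d : MonoidAlgebra K (DihedralGroup n) →ₗ[K] MonoidAlgebra K (DihedralGroup n))
    (hd : d ∈ DerSub K (MonoidAlgebra K (DihedralGroup n)))
    (h1 : d (single (r (1 : ZMod n)) (1 : K)) = 0)
    (h2 : d (single (sr (0 : ZMod n)) (1 : K)) = 0) : d = 0 := by
  have hd' : ∀ a b, d (a * b) = d a * b + a * d b := hd
  have h0 : d 1 = 0 := by
    have := hd' 1 1
    simpa using this
  have hp : ∀ i : ℕ, d (single (r (1 : ZMod n)) (1 : K) ^ i) = 0 := by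
    intro i
    induction i with
    | zero => simpa using h0
    | succ k ih => rw [pow_succ, hd', ih, h1]; simp
  have hr : ∀ i : ZMod n, d (single (r i) (1 : K)) = 0 := by
    intro i
    have := hp i.val
    rw [MonoidAlgebra.single_pow, r_one_pow, one_pow] at this
    simpa using this
  have hs : ∀ i : ZMod n, d (single (sr i) (1 : K)) = 0 := by
    intro i
    have := hd' (single (sr (0 : ZMod n)) (1 : K)) (single (r i) (1 : K))
    rw [h2, hr, single_mul_single] at this
    simpa using this
  have hg : ∀ g : DihedralGroup n, d (single g (1 : K)) = 0 := by
    rintro (i | i)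
    · exact hr i
    · exact hs i
  refine LinearMap.ext fun a => ?_
  induction a using MonoidAlgebra.induction_linear with
  | zero => simp
  | add f g hf hg => rw [map_add, hf, hg]; simp
  | single g c =>
    have : single g c = c • (single g (1 : K) : MonoidAlgebra K (DihedralGroup n)) := by simp
    rw [this, map_smul, hg]; simp

/-- Coefficient form of the relations. -/
lemma der_rel [CharP K 2] (u v : MonoidAlgebra K (DihedralGroup n)) :
    (single (sr (0 : ZMod n)) (1 : K) * v + v * single (sr (0 : ZMod n)) (1 : K) = 0 ∧
    u * single (sr (1 : ZMod n)) (1 : K)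
      + single (r (1 : ZMod n)) (1 : K) * v * single (r (1 : ZMod n)) (1 : K)
      + single (sr (-1 : ZMod n)) (1 : K) * u = v) ↔
    (∀ j, v.coeff (sr (-j)) = v.coeff (sr j)) ∧ (∀ j, v.coeff (r (-j)) = v.coeff (r j)) ∧
    (∀ j, u.coeff (r (1 - j)) = u.coeff (r (1 + j))) ∧
    (∀ j, u.coeff (sr j) + u.coeff (sr (-j)) = v.coeff (r (j + 1)) + v.coeff (r (j - 1))) := by
  have e : ∀ a b : K, a + b = 0 ↔ b = a := fun a b => by
    rw [CharTwo.add_eq_zero]; exact eq_comm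
  constructor
  · rintro ⟨h1, h2⟩
    have a1 : ∀ g, _ := fun g => congrArg (fun z => z.coeff g) h1
    have a2 : ∀ g, _ := fun g => congrArg (fun z => z.coeff g) h2
    simp only [coeff_add, Finsupp.add_apply, coeff_single_mul_apply, coeff_mul_single_apply,
      coeff_zero, Finsupp.zero_apply, one_mul, mul_one, inv_r, inv_sr] at a1 a2
    refine ⟨fun j => ?_, fun j => ?_, fun j => ?_, fun j => ?_⟩
    · have := a1 (r j)
      simpa [e] using this
    · have := a1 (sr j)
      simpa [e] using this
    · have := a2 (sr j)
      simp only [sr_mul_sr, r_mul_sr, sr_mul_r] at this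
      rw [show j + -1 - -1 = j by ring, show j - -1 = 1 + j by ring] at this
      rw [← CharTwo.add_eq_zero]
      linear_combination this
    · have := a2 (r (j + 1))
      simp only [sr_mul_sr, r_mul_sr, sr_mul_r, r_mul_r] at this
      rw [show -1 + (j + 1 + -1) = j - 1 by ring, show 1 - (j + 1) = -j by ring,
        show -1 + (j + 1) = j by ring] at this
      linear_combination this - CharTwo.add_self_eq_zero (v.coeff (r (j - 1)))
  · rintro ⟨b1, b2, b3, b4⟩
    constructor
    · ext g
      simp only [coeff_add, Finsupp.add_apply, coeff_single_mul_apply, coeff_mul_single_apply,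
        coeff_zero, Finsupp.zero_apply, one_mul, mul_one, inv_r, inv_sr]
      rcases g with j | j
      · simpa [e] using b1 j
      · simpa [e] using b2 j
    · ext g
      simp only [coeff_add, Finsupp.add_apply, coeff_single_mul_apply, coeff_mul_single_apply,
        one_mul, mul_one, inv_r, inv_sr]
      rcases g with j | j
      · simp only [sr_mul_sr, r_mul_sr, sr_mul_r, r_mul_r]
        have := b4 (j - 1)
        rw [show -(j - 1) = 1 - j by ring, show j - 1 + 1 = j by ring] at this
        rw [show -1 + (j + -1) = j - 1 - 1 by ring, show -1 + j = j - 1 by ring]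
        linear_combination this + CharTwo.add_self_eq_zero (v.coeff (r (j - 1 - 1)))
      · simp only [sr_mul_sr, r_mul_sr, sr_mul_r]
        rw [show j + -1 - -1 = j by ring, show j - -1 = 1 + j by ring, b3]
        linear_combination CharTwo.add_self_eq_zero (u.coeff (r (1 + j)))

lemma der_rel_of_mem (d : MonoidAlgebra K (DihedralGroup n) →ₗ[K] MonoidAlgebra K (DihedralGroup n))
    (hd : d ∈ DerSub K (MonoidAlgebra K (DihedralGroup n))) :
    single (sr (0 : ZMod n)) (1 : K) * d (single (sr 0) 1)
      + d (single (sr 0) 1) * single (sr (0 : ZMod n)) (1 : K) = 0 ∧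
    d (single (r 1) 1) * single (sr (1 : ZMod n)) (1 : K)
      + single (r (1 : ZMod n)) (1 : K) * d (single (sr 0) 1) * single (r (1 : ZMod n)) (1 : K)
      + single (sr (-1 : ZMod n)) (1 : K) * d (single (r 1) 1) = d (single (sr 0) 1) := by
  have hd' : ∀ a b, d (a * b) = d a * b + a * d b := hd
  have h0 : d 1 = 0 := by
    have := hd' 1 1
    simpa using this
  constructor
  · have := hd' (single (sr 0) 1) (single (sr 0) 1)
    rw [single_mul_single, sr_mul_self, one_mul, ← MonoidAlgebra.one_def, h0] at this
    rw [add_comm, ← this]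
  · have := hd' (single (r 1) 1 * single (sr 0) 1) (single (r 1) 1)
    rw [hd' (single (r 1) 1) (single (sr 0) 1), add_mul, mul_assoc (d _)] at this
    simp only [single_mul_single, sr_mul_r, r_mul_sr, zero_add, zero_sub, mul_one] at this
    rw [show sr (-1 + 1 : ZMod n) = sr 0 by simp] at this
    exact this.symm

/-- Coefficients of the values on the generators, at representatives modulo negation. -/
noncomputable def derCoord (K : Type*) [Field K] (n k : ℕ) :
    DerSub K (MonoidAlgebra K (DihedralGroup n)) →ₗ[K]
      (Fin (k + 1) → K) × (Fin (k + 1) → K) × (Fin (k + 1) → K) × (Fin (k + 1) → K) where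
  toFun d :=
    (fun i => (d.1 (single (r 1) 1)).coeff (r (1 + ((i : ℕ) : ZMod n))),
     fun i => (d.1 (single (r 1) 1)).coeff (sr ((i : ℕ) : ZMod n)),
     fun i => (d.1 (single (sr 0) 1)).coeff (r ((i : ℕ) : ZMod n)),
     fun i => (d.1 (single (sr 0) 1)).coeff (sr ((i : ℕ) : ZMod n)))
  map_add' d e := by
    ext i <;> simp
  map_smul' c d := by
    ext i <;> simp

lemma exists_rep [NeZero n] {k : ℕ} (hk : n = k + k) (x : ZMod n) :
    ∃ i : Fin (k + 1), x = ((i : ℕ) : ZMod n) ∨ x = -((i : ℕ) : ZMod n) := by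
  have hlt : x.valMinAbs.natAbs < k + 1 := by
    have := x.natAbs_valMinAbs_le
    omega
  refine ⟨⟨_, hlt⟩, ?_⟩
  have := x.natCast_natAbs_valMinAbs
  simp only [this]
  split_ifs <;> simp

lemma derCoord_injective [NeZero n] [CharP K 2] {k : ℕ} (hk : n = k + k) :
    Function.Injective (derCoord K n k) := by
  rw [injective_iff_map_eq_zero]
  rintro ⟨d, hd⟩ h
  simp only [derCoord, LinearMap.coe_mk, AddHom.coe_mk, Prod.mk_eq_zero, funext_iff,
    Pi.zero_apply] at h
  obtain ⟨ha, hb, hc, he⟩ := h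
  obtain ⟨b1, b2, b3, b4⟩ := (der_rel _ _).1 (der_rel_of_mem d hd)
  have hc' : ∀ j, (d (single (sr 0) 1)).coeff (r j) = 0 := by
    intro j
    obtain ⟨i, rfl | rfl⟩ := exists_rep hk j
    · exact hc i
    · rw [b2]; exact hc i
  apply Subtype.ext
  apply der_eq_zero d hd
  · ext g
    rcases g with j | j
    · obtain ⟨i, hi⟩ := exists_rep hk (j - 1)
      rcases hi with hi | hi
      · rw [show j = 1 + (i : ℕ) by linear_combination hi]; exact ha i
      · rw [show j = 1 - (i : ℕ) by linear_combination hi, b3]; exact ha i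
    · obtain ⟨i, rfl | rfl⟩ := exists_rep hk j
      · exact hb i
      · have := b4 (i : ℕ)
        rw [hc', hc', hb] at this
        simpa using this
  · ext g
    rcases g with j | j
    · exact hc' j
    · obtain ⟨i, rfl | rfl⟩ := exists_rep hk j
      · exact he i
      · rw [b1]; exact he i

lemma derCoord_surjective [NeZero n] [CharP K 2] {k : ℕ} (hk : n = k + k) :
    Function.Surjective (derCoord K n k) := by
  rintro ⟨a, b, c, e⟩
  have hlt : ∀ x : ZMod n, x.valMinAbs.natAbs < k + 1 := by
    intro x
    have := x.natAbs_valMinAbs_le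
    omega
  let q : ZMod n → Fin (k + 1) := fun x => ⟨x.valMinAbs.natAbs, hlt x⟩
  have hq : ∀ x, q (-x) = q x := fun x => by simp [q]
  have hqi : ∀ i : Fin (k + 1), q ((i : ℕ) : ZMod n) = i := by
    intro i
    have : (i : ℕ) ≤ n / 2 := by have := i.2; omega
    ext
    simp [q, ZMod.valMinAbs_natCast_of_le_half this]
  let β : ZMod n → K := fun x =>
    if x.val ≤ n / 2 then b (q x) else b (q x) + (c (q (x + 1)) + c (q (x - 1)))
  let uf : DihedralGroup n → K := fun g => match g with
    | r j => a (q (j - 1))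
    | sr j => β j
  let vf : DihedralGroup n → K := fun g => match g with
    | r j => c (q j)
    | sr j => e (q j)
  let u : MonoidAlgebra K (DihedralGroup n) := .ofCoeff (Finsupp.equivFunOnFinite.symm uf)
  let v : MonoidAlgebra K (DihedralGroup n) := .ofCoeff (Finsupp.equivFunOnFinite.symm vf)
  have hu1 : ∀ j, u.coeff (r j) = a (q (j - 1)) := fun j => rfl
  have hu2 : ∀ j, u.coeff (sr j) = β j := fun j => rfl
  have hv1 : ∀ j, v.coeff (r j) = c (q j) := fun j => rfl
  have hv2 : ∀ j, v.coeff (sr j) = e (q j) := fun j => rfl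
  have hrel := (der_rel u v).2 ⟨?_, ?_, ?_, ?_⟩
  · obtain ⟨d, hd, hdu, hdv⟩ := exists_der hk u v hrel.1 hrel.2
    refine ⟨⟨d, hd⟩, ?_⟩
    simp only [derCoord, LinearMap.coe_mk, AddHom.coe_mk, hdu, hdv, hu1, hu2, hv1, hv2, hqi,
      add_sub_cancel_left]
    refine Prod.ext rfl (Prod.ext ?_ rfl)
    funext i
    have : (i : ℕ) ≤ n / 2 := by have := i.2; omega
    have hn0 : n ≠ 0 := NeZero.ne n
    have h2 : ((i : ℕ) : ZMod n).val ≤ n / 2 := by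
      rw [ZMod.val_natCast, Nat.mod_eq_of_lt (by omega)]; exact this
    simp only [β, if_pos h2, hqi]
  · intro j; rw [hv2, hv2, hq]
  · intro j; rw [hv1, hv1, hq]
  · intro j
    rw [hu1, hu1, show 1 - j - 1 = -j by ring, hq, show 1 + j - 1 = j by ring]
  · intro j
    rw [hu2, hu2, hv1, hv1]
    have h1 := j.natCast_natAbs_valMinAbs
    have h2 := (-j).natCast_natAbs_valMinAbs
    rw [ZMod.natAbs_valMinAbs_neg, h1, neg_neg] at h2
    have e1 : q (-j + 1) = q (j - 1) := by rw [← hq]; congr 1; ring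
    have e2 : q (-j - 1) = q (j + 1) := by rw [← hq]; congr 1; ring
    have key : j = -j → c (q (j + 1)) + c (q (j - 1)) = 0 := by
      intro h
      rw [← e1, ← h]
      exact CharTwo.add_self_eq_zero _
    simp only [β, hq, e1, e2]
    have s1 := CharTwo.add_self_eq_zero (b (q j))
    split_ifs at h2 ⊢ with t1 t2 t2
    · rw [key h2, s1]
    · linear_combination s1
    · linear_combination s1
    · have := key h2.symm
      linear_combination s1 + this

end Der

/-- Let `n > 2` be even, `m ≥ 1` and `K` a finite field with `2 ^ m`
elements. Then the space `Der(K D_{2n})` of derivations of the group algebra of the dihedral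
group of order `2n` is a `K`-vector space of dimension `2n + 4`. -/
theorem finrank_derivations_groupAlgebra_dihedral_even (n : ℕ) (hn : 2 < n) (hne : Even n)
    (m : ℕ) (hm : 1 ≤ m) {K : Type*} [Field K] [Fintype K] (hK : Fintype.card K = 2 ^ m) :
    Module.finrank K (DerSub K (MonoidAlgebra K (DihedralGroup n))) = 2 * n + 4 := by
  obtain ⟨k, hk⟩ := hne
  have : NeZero n := ⟨by omega⟩
  have : CharP K 2 := by
    have h0 : ((Fintype.card K : ℕ) : K) = 0 := FiniteField.cast_card_eq_zero K
    rw [hK] at h0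
    push_cast at h0
    have h2 : (2 : K) = 0 := by
      by_contra h
      exact pow_ne_zero m h h0
    exact CharTwo.of_one_ne_zero_of_two_eq_zero one_ne_zero h2
  rw [(LinearEquiv.ofBijective (derCoord K n k)
    ⟨derCoord_injective hk, derCoord_surjective hk⟩).finrank_eq]
  simp only [Module.finrank_prod, Module.finrank_fintype_fun_eq_card, Fintype.card_fin]
  omega
end

section
/- Let n > 2 be an odd integer, let m ≥ 1, and let K = F_{2^m} be a finite field with 2^m elements. Then the set Der(K D_{2n}) of derivations of the group algebra of the dihedral group D_{2n} of order 2n is a K-vector space of dimension (3n + 1)/2. -/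
/-- Coefficients constant on the fibres of `p`. -/
theorem fibre_finrank {K G T : Type*} [Field K] [Finite G] [Fintype T] (p : G → T)
    (hp : Function.Surjective p) (S : Submodule K (MonoidAlgebra K G))
    (hS : ∀ w, w ∈ S ↔ ∀ g h, p g = p h → w.coeff g = w.coeff h) :
    Module.finrank K S = Fintype.card T := by
  let L : (T → K) →ₗ[K] MonoidAlgebra K G :=
    { toFun := fun f => MonoidAlgebra.ofCoeff (Finsupp.equivFunOnFinite.symm (f ∘ p))
      map_add' := by intro f g; ext; simp
      map_smul' := by intro c f; ext; simp }
  have hL : ∀ f g, (L f).coeff g = f (p g) := fun f g => rfl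
  have hinj : Function.Injective L := by
    intro f f' h
    funext t
    obtain ⟨g, rfl⟩ := hp t
    rw [← hL f, ← hL f', h]
  have hr : LinearMap.range L = S := by
    ext w
    rw [hS]
    constructor
    · rintro ⟨f, rfl⟩ g h e
      rw [hL, hL, e]
    · intro h
      refine ⟨fun t => w.coeff (Function.surjInv hp t), ?_⟩
      ext g
      rw [hL]
      exact h _ _ (Function.surjInv_eq hp _)
  rw [← hr, LinearMap.finrank_range_of_inj hinj, Module.finrank_fintype_fun_eq_card]

section
open DihedralGroup

variable {n : ℕ} {K : Type*} [Field K]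

/-- A group element in the group algebra. -/
noncomputable abbrev gel (K : Type*) [Field K] {n : ℕ} (g : DihedralGroup n) :
    MonoidAlgebra K (DihedralGroup n) := MonoidAlgebra.single g 1

theorem gel_mul (g h : DihedralGroup n) : gel K g * gel K h = gel K (g * h) := by
  simp [gel, MonoidAlgebra.single_mul_single]

/-- A function of `ZMod n`, `n` odd, invariant under shift by two is constant. -/
theorem const_of_shift [NeZero n] (hno : Odd n) {X : Type*} (f : ZMod n → X)
    (h : ∀ i, f (i + 2) = f i) (i j : ZMod n) : f i = f j := by
  have h1 : ∀ (k : ℕ) i, f (i + 2 * k) = f i := by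
    intro k
    induction k with
    | zero => intro i; simp
    | succ k ih =>
      intro i
      rw [← ih i, ← h (i + 2 * k)]
      congr 1
      push_cast; ring
  obtain ⟨m, hm⟩ := hno
  have hz : (2 * (m : ZMod n) + 1) = 0 := by
    have : ((2 * m + 1 : ℕ) : ZMod n) = 0 := by rw [← hm]; exact ZMod.natCast_self n
    exact_mod_cast this
  have := h1 ((i - j) * (m + 1)).val j
  rw [ZMod.natCast_zmod_val] at this
  rw [← this]
  congr 1
  linear_combination (-(i - j)) * hz

/-- The commutator with the rotation generator. -/
noncomputable def adx (n : ℕ) (K : Type*) [Field K] :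
    MonoidAlgebra K (DihedralGroup n) →ₗ[K] MonoidAlgebra K (DihedralGroup n) :=
  LinearMap.mulRight K (gel K (r 1)) - LinearMap.mulLeft K (gel K (r 1))

theorem adx_apply (u : MonoidAlgebra K (DihedralGroup n)) :
    adx n K u = u * gel K (r 1) - gel K (r 1) * u := by simp [adx]

theorem finrank_ker_adx [NeZero n] (hno : Odd n) :
    Module.finrank K (LinearMap.ker (adx n K)) = n + 1 := by
  let p : DihedralGroup n → ZMod n ⊕ Unit := fun g =>
    match g with
    | r i => Sum.inl i
    | sr _ => Sum.inr ()
  rw [fibre_finrank p]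
  · simp [ZMod.card]
  · rintro (i | u)
    · exact ⟨r i, rfl⟩
    · exact ⟨sr 0, rfl⟩
  · intro w
    rw [LinearMap.mem_ker, adx_apply, sub_eq_zero]
    constructor
    · intro e
      have e' : ∀ i, w.coeff (sr (i + 2)) = w.coeff (sr i) := by
        intro i
        have := congrArg (fun z => z.coeff (sr (i + 1))) e
        simp at this
        rw [this]
        congr 2; ring
      rintro (i | i) (j | j) h
      · simp only [p, Sum.inl.injEq] at h; rw [h]
      · simp [p] at h
      · simp [p] at h
      · exact const_of_shift hno (fun i => w.coeff (sr i)) e' i j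
    · intro h
      ext g
      rcases g with i | i
      · simp; congr 2; ring
      · simp; exact h _ _ rfl

/-- The possible values at the reflection of derivations killing the rotations. -/
def Wsub (n : ℕ) (K : Type*) [Field K] :
    Submodule K (MonoidAlgebra K (DihedralGroup n)) where
  carrier := {w | (∀ i, gel K (r i) * w * gel K (r i) = w) ∧
    w * gel K (sr 0) = gel K (sr 0) * w}
  zero_mem' := by simp
  add_mem' := by
    rintro a b ⟨ha, ha'⟩ ⟨hb, hb'⟩
    refine ⟨fun i => ?_, ?_⟩
    · rw [mul_add, add_mul, ha, hb]
    · rw [mul_add, add_mul, ha', hb']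
  smul_mem' := by
    rintro c b ⟨hb, hb'⟩
    refine ⟨fun i => ?_, ?_⟩
    · rw [mul_smul_comm, smul_mul_assoc, hb]
    · rw [mul_smul_comm, smul_mul_assoc, hb']

theorem finrank_Wsub [NeZero n] (hno : Odd n) :
    Module.finrank K (Wsub n K) = n / 2 + 2 := by
  let p : DihedralGroup n → Unit ⊕ Fin (n / 2 + 1) := fun g =>
    match g with
    | r _ => Sum.inl ()
    | sr i => Sum.inr ⟨i.valMinAbs.natAbs, Nat.lt_succ_of_le (ZMod.natAbs_valMinAbs_le i)⟩
  rw [fibre_finrank p]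
  · simp; ring
  · rintro (u | ⟨k, hk⟩)
    · exact ⟨r 0, rfl⟩
    · refine ⟨sr k, ?_⟩
      simp [p, ZMod.valMinAbs_natCast_of_le_half (Nat.le_of_lt_succ hk)]
  · intro w
    constructor
    · rintro ⟨h1, h2⟩
      have e1 : ∀ i, w.coeff (r (i + 2)) = w.coeff (r i) := by
        intro i
        have := congrArg (fun z => z.coeff (r (i + 2))) (h1 1)
        simp at this
        rw [← this]
        congr 2; ring
      have e2 : ∀ i, w.coeff (sr (-i)) = w.coeff (sr i) := by
        intro i
        have := congrArg (fun z => z.coeff (r i)) h2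
        simp at this
        exact this
      rintro (i | i) (j | j) h
      · exact const_of_shift hno (fun i => w.coeff (r i)) e1 i j
      · simp [p] at h
      · simp [p] at h
      · simp only [p, Sum.inr.injEq, Fin.mk.injEq,
          ZMod.natAbs_valMinAbs_eq_natAbs_valMinAbs] at h
        rcases h with rfl | rfl
        · rfl
        · exact e2 _
    · intro h
      have e2 : ∀ i, w.coeff (sr (-i)) = w.coeff (sr i) := by
        intro i
        apply h
        simp [p]
      refine ⟨fun i => ?_, ?_⟩
      · ext g
        rcases g with j | j
        · simp; exact h _ _ rfl
        · simp
      · ext g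
        rcases g with j | j
        · simp [e2]
        · simp; exact h _ _ rfl

/-- The derivation killing rotations with given value at the reflection. -/
noncomputable def Dw (w : MonoidAlgebra K (DihedralGroup n)) :
    MonoidAlgebra K (DihedralGroup n) →ₗ[K] MonoidAlgebra K (DihedralGroup n) :=
  (MonoidAlgebra.basis (DihedralGroup n) K).constr K (fun g =>
    match g with
    | r _ => 0
    | sr i => w * gel K (r i))

theorem Dw_r (w : MonoidAlgebra K (DihedralGroup n)) (i : ZMod n) : Dw w (gel K (r i)) = 0 := by
  rw [gel, ← MonoidAlgebra.basis_apply, Dw, Module.Basis.constr_basis]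

theorem Dw_sr (w : MonoidAlgebra K (DihedralGroup n)) (i : ZMod n) :
    Dw w (gel K (sr i)) = w * gel K (r i) := by
  rw [gel, ← MonoidAlgebra.basis_apply, Dw, Module.Basis.constr_basis]

theorem leibniz_of_basis (d : MonoidAlgebra K (DihedralGroup n) →ₗ[K]
      MonoidAlgebra K (DihedralGroup n))
    (h : ∀ g k, d (gel K g * gel K k) = d (gel K g) * gel K k + gel K g * d (gel K k)) :
    d ∈ DerSub K (MonoidAlgebra K (DihedralGroup n)) := by
  intro a b
  have hs : ∀ (g : DihedralGroup n) (c : K), MonoidAlgebra.single g c = c • gel K g := by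
    intro g c; simp [gel]
  induction a using MonoidAlgebra.induction_linear with
  | zero => simp
  | add a a' ha ha' => rw [add_mul, map_add, ha, ha', map_add]; noncomm_ring
  | single g c =>
    induction b using MonoidAlgebra.induction_linear with
    | zero => simp
    | add a a' ha ha' => rw [mul_add, map_add, ha, ha', map_add]; noncomm_ring
    | single k c' =>
      rw [hs, hs]
      simp only [smul_mul_assoc, mul_smul_comm, map_smul, h, smul_add]

theorem Dw_mem [CharP K 2] (w : MonoidAlgebra K (DihedralGroup n)) (hw : w ∈ Wsub n K) :
    Dw w ∈ DerSub K (MonoidAlgebra K (DihedralGroup n)) := by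
  obtain ⟨h1, h2⟩ := hw
  have h3 : ∀ i, gel K (r i) * w = w * gel K (r (-i)) := by
    intro i
    conv_rhs => rw [← h1 i]
    rw [mul_assoc, gel_mul, r_mul_r]
    simp [gel, ← MonoidAlgebra.one_def]
  have h4 : ∀ z : MonoidAlgebra K (DihedralGroup n), z + z = 0 := by
    intro z
    rw [← two_smul K z, CharTwo.two_eq_zero, zero_smul]
  apply leibniz_of_basis
  rintro (i | i) (j | j)
  · rw [gel_mul, r_mul_r, Dw_r, Dw_r, Dw_r]; simp
  · rw [gel_mul, r_mul_sr, Dw_r, Dw_sr, Dw_sr, ← mul_assoc, h3, mul_assoc, gel_mul, r_mul_r]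
    rw [zero_mul, zero_add]; congr 3; ring
  · rw [gel_mul, sr_mul_r, Dw_sr, Dw_r, Dw_sr, mul_assoc, gel_mul, r_mul_r]; simp
  · have e : gel K (sr i) = gel K (sr 0) * gel K (r i) := by rw [gel_mul, sr_mul_r, zero_add]
    rw [gel_mul, sr_mul_sr, Dw_r, Dw_sr, Dw_sr, e, mul_assoc, gel_mul, r_mul_sr, mul_assoc,
      ← mul_assoc (gel K (r i)), h3, mul_assoc w, gel_mul, r_mul_r, ← mul_assoc, ← h2, mul_assoc,
      gel_mul, sr_mul_r]
    rw [show 0 + (-i + j) = j - i by ring, h4]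

theorem der_one {d : MonoidAlgebra K (DihedralGroup n) →ₗ[K] MonoidAlgebra K (DihedralGroup n)}
    (hd : d ∈ DerSub K (MonoidAlgebra K (DihedralGroup n))) : d 1 = 0 := by
  have := hd 1 1
  simpa using this

theorem der_rot {d : MonoidAlgebra K (DihedralGroup n) →ₗ[K] MonoidAlgebra K (DihedralGroup n)}
    [NeZero n]
    (hd : d ∈ DerSub K (MonoidAlgebra K (DihedralGroup n))) (h : d (gel K (r 1)) = 0)
    (i : ZMod n) : d (gel K (r i)) = 0 := by
  have key : ∀ k : ℕ, d (gel K (r (k : ZMod n))) = 0 := by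
    intro k
    induction k with
    | zero => simpa [gel, ← MonoidAlgebra.one_def] using der_one hd
    | succ k ih =>
      rw [Nat.cast_succ, ← r_mul_r, ← gel_mul, hd, ih, h]; simp
  have := key i.val
  rwa [ZMod.natCast_zmod_val] at this

noncomputable instance instDerGroup : AddCommGroup (DerSub K (MonoidAlgebra K (DihedralGroup n))) :=
  Submodule.addCommGroup (DerSub K (MonoidAlgebra K (DihedralGroup n)))

/-- Evaluation of a derivation. -/
noncomputable def evD (a : MonoidAlgebra K (DihedralGroup n)) :
    DerSub K (MonoidAlgebra K (DihedralGroup n)) →ₗ[K] MonoidAlgebra K (DihedralGroup n) :=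
  (LinearMap.applyₗ a).comp (DerSub K (MonoidAlgebra K (DihedralGroup n))).subtype

theorem evD_apply (a : MonoidAlgebra K (DihedralGroup n))
    (d : DerSub K (MonoidAlgebra K (DihedralGroup n))) : evD a d = d.1 a := rfl

theorem finrank_ker_evD [NeZero n] [CharP K 2] (hno : Odd n) :
    Module.finrank K (LinearMap.ker (evD (gel K (r 1 : DihedralGroup n)))) = n / 2 + 2 := by
  rw [← finrank_Wsub (K := K) hno]
  let T := (evD (gel K (sr 0 : DihedralGroup n))).domRestrict
    (LinearMap.ker (evD (gel K (r 1 : DihedralGroup n))))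
  have hT : ∀ d, T d = d.1.1 (gel K (sr 0)) := fun d => rfl
  have hsr : ∀ i : ZMod n, gel K (sr i) = gel K (sr 0) * gel K (r i) := by
    intro i; rw [gel_mul, sr_mul_r, zero_add]
  have hinj : Function.Injective T := by
    rw [injective_iff_map_eq_zero]
    rintro ⟨⟨d, hd⟩, hd1⟩ h
    rw [hT] at h
    rw [LinearMap.mem_ker, evD_apply] at hd1
    simp only at h hd1
    have hr := der_rot hd hd1
    have : d = 0 := by
      apply (MonoidAlgebra.basis (DihedralGroup n) K).ext
      intro g
      rw [MonoidAlgebra.basis_apply]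
      rcases g with i | i
      · exact hr i
      · change d (gel K (sr i)) = 0
        rw [hsr, hd, h, hr]; simp
    subst this
    rfl
  have hrange : LinearMap.range T = Wsub n K := by
    ext w
    constructor
    · rintro ⟨⟨⟨d, hd⟩, hd1⟩, rfl⟩
      rw [hT]
      rw [LinearMap.mem_ker, evD_apply] at hd1
      simp only at hd1 ⊢
      have hr := der_rot hd hd1
      refine ⟨fun i => ?_, ?_⟩
      · have : gel K (sr 0) = gel K (r i) * gel K (sr 0) * gel K (r i) := by
          simp
        conv_rhs => rw [this, hd, hd, hr]
        simp
      · have : d (gel K (sr 0) * gel K (sr 0)) = 0 := by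
          rw [gel_mul, sr_mul_sr]; exact hr _
        rw [hd] at this
        rw [eq_neg_of_add_eq_zero_left this, ← neg_one_smul K, CharTwo.neg_eq, one_smul]
    · intro hw
      refine ⟨⟨⟨Dw w, Dw_mem w hw⟩, ?_⟩, ?_⟩
      · rw [LinearMap.mem_ker, evD_apply]; exact Dw_r w 1
      · rw [hT]
        simp only
        rw [Dw_sr]
        simp [gel, ← MonoidAlgebra.one_def]
  rw [← hrange, LinearMap.finrank_range_of_inj hinj]

theorem range_evD [NeZero n] [CharP K 2] (hno : Odd n) :
    LinearMap.range (evD (gel K (r 1 : DihedralGroup n))) = LinearMap.range (adx n K) := by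
  ext z
  constructor
  · rintro ⟨⟨d, hd⟩, rfl⟩
    rw [evD_apply]
    simp only
    refine ⟨∑ i : ZMod n, d (gel K (r i)) * gel K (r (-i)), ?_⟩
    rw [adx_apply, Finset.sum_mul, Finset.mul_sum]
    rw [← Equiv.sum_comp (Equiv.addRight (1 : ZMod n))
      (fun i => d (gel K (r i)) * gel K (r (-i)) * gel K (r 1)), ← Finset.sum_sub_distrib]
    have hn1 : ((n : ℕ) : K) = 1 := by
      obtain ⟨m, hm⟩ := hno
      rw [hm]; push_cast; rw [CharTwo.two_eq_zero]; simp
    have : ∀ i : ZMod n, d (gel K (r (Equiv.addRight (1 : ZMod n) i))) *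
        gel K (r (-(Equiv.addRight (1 : ZMod n) i))) * gel K (r 1) -
        gel K (r 1) * (d (gel K (r i)) * gel K (r (-i))) = d (gel K (r 1)) := by
      intro i
      rw [Equiv.coe_addRight]
      simp only
      rw [mul_assoc, gel_mul, r_mul_r,
        show -(i + 1) + 1 = -i by ring, add_comm i 1, ← r_mul_r, ← gel_mul, hd, add_mul,
        mul_assoc (d _), gel_mul, r_mul_r, mul_assoc]
      simp [gel, ← MonoidAlgebra.one_def]
    rw [Finset.sum_congr rfl (fun i _ => this i)]
    rw [Finset.sum_const, Finset.card_univ, ZMod.card, ← Nat.cast_smul_eq_nsmul K, hn1, one_smul]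
  · rintro ⟨u, rfl⟩
    refine ⟨⟨LinearMap.mulLeft K u - LinearMap.mulRight K u, ?_⟩, ?_⟩
    · intro a b
      simp only [LinearMap.sub_apply, LinearMap.mulLeft_apply, LinearMap.mulRight_apply]
      noncomm_ring
    · rw [evD_apply, adx_apply]
      simp

end

/-- Let `n > 2` be odd, `m ≥ 1` and `K` a finite field with `2 ^ m`
elements. Then the space `Der(K D_{2n})` of derivations of the group algebra of the dihedral
group of order `2n` is a `K`-vector space of dimension `(3n + 1) / 2`. -/
theorem finrank_derivations_groupAlgebra_dihedral_odd (n : ℕ) (hn : 2 < n) (hno : Odd n)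
    (m : ℕ) (hm : 1 ≤ m) {K : Type*} [Field K] [Fintype K] (hK : Fintype.card K = 2 ^ m) :
    Module.finrank K (DerSub K (MonoidAlgebra K (DihedralGroup n))) = (3 * n + 1) / 2 := by
  have : NeZero n := ⟨by omega⟩
  have : CharP K 2 := by
    have : Fact (Nat.Prime 2) := ⟨Nat.prime_two⟩
    exact charP_of_card_eq_prime_pow hK
  have hf : Module.Finite K (MonoidAlgebra K (DihedralGroup n)) :=
    Module.Finite.of_basis (MonoidAlgebra.basis (DihedralGroup n) K)
  have hA : Module.finrank K (MonoidAlgebra K (DihedralGroup n)) = 2 * n := by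
    rw [Module.finrank_eq_card_basis (MonoidAlgebra.basis (DihedralGroup n) K),
      DihedralGroup.card]
  have h1 := LinearMap.finrank_range_add_finrank_ker (adx n K)
  have h2 := LinearMap.finrank_range_add_finrank_ker
    (evD (gel K (DihedralGroup.r 1 : DihedralGroup n)))
  rw [finrank_ker_adx hno, hA] at h1
  rw [range_evD hno, finrank_ker_evD hno] at h2
  obtain ⟨k, rfl⟩ := hno
  omega
end

section
/- Let n > 2 be an integer, let m ≥ 1, and let K = F_{2^m} be a finite field with 2^m elements. For b ∈ K D_{2n}, let d_b : K D_{2n} → K D_{2n} be the inner derivation d_b(a) = ab − ba. Then the set of inner derivations {d_b ∣ b ∈ K D_{2n}} of the group algebra of the dihedral group D_{2n} of order 2n is a K-vector space of dimension 3⌊(n−1)/2⌋. -/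
namespace InnerDihedral

open DihedralGroup

/-- Commuting pairs in the dihedral group, in terms of elements killed by doubling. -/
def commuteEquiv (n : ℕ) : { p : DihedralGroup n × DihedralGroup n // Commute p.1 p.2 } ≃
    (ZMod n × ZMod n) ⊕ ({a : ZMod n // a + a = 0} × ZMod n) ⊕
      ({a : ZMod n // a + a = 0} × ZMod n) ⊕ ({a : ZMod n // a + a = 0} × ZMod n) where
  toFun := fun
    | ⟨⟨r i, r j⟩, _⟩ => .inl (i, j)
    | ⟨⟨r i, sr j⟩, h⟩ => .inr (.inl (⟨i, by
        have := sr.inj h.eq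
        linear_combination -this⟩, j))
    | ⟨⟨sr i, r j⟩, h⟩ => .inr (.inr (.inl (⟨j, by
        have := sr.inj h.eq
        linear_combination this⟩, i)))
    | ⟨⟨sr i, sr j⟩, h⟩ => .inr (.inr (.inr (⟨j - i, by
        have := r.inj h.eq
        linear_combination this⟩, i)))
  invFun := fun
    | .inl (i, j) => ⟨(r i, r j), congrArg r (add_comm i j)⟩
    | .inr (.inl (i, j)) => ⟨(r i.1, sr j), congrArg sr (by linear_combination -i.2)⟩
    | .inr (.inr (.inl (j, i))) => ⟨(sr i, r j.1), congrArg sr (by linear_combination j.2)⟩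
    | .inr (.inr (.inr (j, i))) => ⟨(sr i, sr (j.1 + i)), congrArg r (by linear_combination j.2)⟩
  left_inv := by
    rintro ⟨⟨i | i, j | j⟩, h⟩ <;> simp
  right_inv := by
    rintro (⟨i, j⟩ | ⟨⟨i, hi⟩, j⟩ | ⟨⟨i, hi⟩, j⟩ | ⟨⟨i, hi⟩, j⟩) <;> simp

lemma card_two_torsion_even (k : ℕ) (hk : 0 < k) :
    Nat.card {a : ZMod (2 * k) // a + a = 0} = 2 := by
  have : NeZero (2 * k) := ⟨by omega⟩
  have hset : {a : ZMod (2 * k) | a + a = 0} = {0, (k : ZMod (2 * k))} := by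
    ext a
    simp only [Set.mem_ofPred_eq, Set.mem_insert_iff, Set.mem_singleton_iff]
    constructor
    · intro h
      have hv : a = ((a.val : ℕ) : ZMod (2 * k)) := (ZMod.natCast_zmod_val a).symm
      have hlt := ZMod.val_lt a
      rw [hv, ← Nat.cast_add, ZMod.natCast_eq_zero_iff] at h
      obtain ⟨c, hc⟩ := h
      have hc2 : a.val = k * c := by linarith
      have : c < 2 := by
        by_contra hcon
        nlinarith
      interval_cases c
      · left
        rw [hv, hc2]; simp
      · right
        rw [hv, hc2]; simp
    · rintro (rfl | rfl)
      · simp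
      · rw [← Nat.cast_add, ZMod.natCast_eq_zero_iff]
        exact ⟨1, by ring⟩
  have hne : (0 : ZMod (2 * k)) ≠ (k : ZMod (2 * k)) := by
    intro h
    have := (ZMod.natCast_eq_zero_iff k (2 * k)).1 h.symm
    have := Nat.le_of_dvd hk this
    omega
  change Nat.card ({a : ZMod (2 * k) | a + a = 0} : Set _) = 2
  rw [hset, Nat.card_coe_set_eq, Set.ncard_pair hne]

lemma card_conjClasses_even (k : ℕ) (hk : 0 < k) :
    Nat.card (ConjClasses (DihedralGroup (2 * k))) = k + 3 := by
  have : NeZero (2 * k) := ⟨by omega⟩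
  have h := card_comm_eq_card_conjClasses_mul_card (DihedralGroup (2 * k))
  rw [Nat.card_congr (commuteEquiv (2 * k))] at h
  simp only [Nat.card_sum, Nat.card_prod, card_two_torsion_even k hk, Nat.card_zmod, nat_card] at h
  have : (4 * k) * (k + 3) = (4 * k) * Nat.card (ConjClasses (DihedralGroup (2 * k))) := by
    linarith
  exact (Nat.eq_of_mul_eq_mul_left (by omega) this).symm

/-- The map `b ↦ d_b`. -/
noncomputable abbrev ad (K G : Type*) [Field K] [Group G] :=
  (LinearMap.mul K (MonoidAlgebra K G)).flip - LinearMap.mul K (MonoidAlgebra K G)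

lemma mem_ker_ad {K G : Type*} [Field K] [Group G] (b : MonoidAlgebra K G) :
    b ∈ LinearMap.ker (ad K G) ↔ ∀ g h : G, IsConj g h → b.coeff g = b.coeff h := by
  rw [LinearMap.mem_ker]
  constructor
  · intro hb g h hgh
    obtain ⟨c, rfl⟩ := isConj_iff.1 hgh
    have h1 := LinearMap.congr_fun hb (MonoidAlgebra.single c 1)
    have h2 : MonoidAlgebra.single c 1 * b = b * MonoidAlgebra.single c 1 := by
      simpa [sub_eq_zero] using h1
    have h3 := congrArg (fun x => x.coeff (c * g)) h2
    simpa using h3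
  · intro hb
    apply LinearMap.ext
    intro a
    simp only [LinearMap.sub_apply, LinearMap.flip_apply, LinearMap.mul_apply',
      LinearMap.zero_apply, sub_eq_zero]
    induction a using MonoidAlgebra.induction_linear with
    | zero => simp
    | add x y hx hy => rw [add_mul, mul_add, hx, hy]
    | single c k =>
      ext h
      simp only [MonoidAlgebra.coeff_mul_single_apply, MonoidAlgebra.coeff_single_mul_apply]
      rw [mul_comm, hb (c⁻¹ * h) (h * c⁻¹) (isConj_iff.2 ⟨c, by group⟩)]

/-- Functions on conjugacy classes are the kernel of `b ↦ d_b`. -/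
noncomputable def kerEquiv (K G : Type*) [Field K] [Group G] [Finite G] :
    LinearMap.ker (ad K G) ≃ₗ[K] (ConjClasses G → K) where
  toFun b := fun c => Quotient.lift (s := IsConj.setoid G) (fun g => b.1.coeff g)
    (fun g h hgh => (mem_ker_ad b.1).1 b.2 g h hgh) c
  map_add' x y := by
    funext c
    obtain ⟨g, rfl⟩ := ConjClasses.exists_rep c
    rfl
  map_smul' k x := by
    funext c
    obtain ⟨g, rfl⟩ := ConjClasses.exists_rep c
    rfl
  invFun f := ⟨.ofCoeff (Finsupp.equivFunOnFinite.symm fun g => f (ConjClasses.mk g)), by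
    rw [mem_ker_ad]
    intro g h hgh
    simp [ConjClasses.mk_eq_mk_iff_isConj.2 hgh]⟩
  left_inv b := by
    apply Subtype.ext
    ext g
    rfl
  right_inv f := by
    funext c
    obtain ⟨g, rfl⟩ := ConjClasses.exists_rep c
    rfl

lemma finrank_range_ad (K G : Type*) [Field K] [Group G] [Finite G] :
    Module.finrank K (LinearMap.range (ad K G)) + Nat.card (ConjClasses G) = Nat.card G := by
  classical
  have := Fintype.ofFinite G
  have := Fintype.ofFinite (ConjClasses G)
  have : Module.Finite K (MonoidAlgebra K G) :=
    Module.Finite.equiv (MonoidAlgebra.coeffLinearEquiv (M := G) (S := K) K).symm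
  have h := LinearMap.finrank_range_add_finrank_ker (ad K G)
  rw [(kerEquiv K G).finrank_eq, (MonoidAlgebra.coeffLinearEquiv (M := G) (S := K) K).finrank_eq,
    Module.finrank_finsupp_self, Module.finrank_fintype_fun_eq_card] at h
  rw [Nat.card_eq_fintype_card, Nat.card_eq_fintype_card]
  exact h

end InnerDihedral


/-- Let `n > 2`, `m ≥ 1` and let `K` be a finite field with `2 ^ m`
elements. For `b` in the group algebra `A = K D_{2n}` of the dihedral group of order `2n`,
the inner derivation `d_b : A → A` is given by `d_b a = a * b - b * a`; the linear map
`b ↦ d_b` is `(LinearMap.mul K A).flip - LinearMap.mul K A`. The set of inner derivations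
(the range of this map) is a `K`-vector space of dimension `3⌊(n − 1)/2⌋`. -/
theorem finrank_innerDerivations_groupAlgebra_dihedral (n : ℕ) (hn : 2 < n)
    (m : ℕ) (hm : 1 ≤ m) {K : Type*} [Field K] [Fintype K] (hK : Fintype.card K = 2 ^ m) :
    (∀ b a : MonoidAlgebra K (DihedralGroup n),
      ((LinearMap.mul K (MonoidAlgebra K (DihedralGroup n))).flip -
        LinearMap.mul K (MonoidAlgebra K (DihedralGroup n))) b a = a * b - b * a) ∧
    Module.finrank K
        (LinearMap.range
          ((LinearMap.mul K (MonoidAlgebra K (DihedralGroup n))).flip -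
            LinearMap.mul K (MonoidAlgebra K (DihedralGroup n)))) = 3 * ((n - 1) / 2) := by
  refine ⟨fun b a => by simp, ?_⟩
  have : NeZero n := ⟨by omega⟩
  have h := InnerDihedral.finrank_range_ad K (DihedralGroup n)
  rw [DihedralGroup.nat_card] at h
  change Module.finrank K (LinearMap.range (InnerDihedral.ad K (DihedralGroup n))) = _
  generalize Module.finrank K (LinearMap.range (InnerDihedral.ad K (DihedralGroup n))) = d at h ⊢
  rcases Nat.even_or_odd' n with ⟨k, rfl | hk⟩
  · rw [InnerDihedral.card_conjClasses_even k (by omega)] at h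
    omega
  · rw [DihedralGroup.card_conjClasses_odd ⟨k, hk⟩] at h
    omega
end
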